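/- Let M be a compact connected boundaryless topological manifold of dimension n ≥ 3 with a compatible metric and let f : M → M be an expansive homeomorphism such that the closure of Per_H^{n−1} equals M. Then the set 𝒮 of singularities of f (the points of M admitting no local product structure) has no isolated points. -/

import Mathlib

open Metric Set

variable {M : Type*} [MetricSpace M]

/-- Iterates of a homeomorphism, indexed by `ℤ`. -/
def iterZ (f : M ≃ₜ M) (k : ℤ) (x : M) : M := (f.toEquiv ^ k) x

/-- `f` is expansive with expansivity constant `α`. -/
def IsExpansive (f : M ≃ₜ M) (α : ℝ) : Prop :=
  ∀ x y : M, x ≠ y → ∃ k : ℤ, α < dist (iterZ f k x) (iterZ f k y)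

/-- Stable set of `x`. -/
def Ws (f : M ≃ₜ M) (x : M) : Set M :=
  {y | Filter.Tendsto (fun k : ℤ => dist (iterZ f k x) (iterZ f k y)) Filter.atTop (nhds 0)}

/-- Unstable set of `x`. -/
def Wu (f : M ≃ₜ M) (x : M) : Set M :=
  {y | Filter.Tendsto (fun k : ℤ => dist (iterZ f k x) (iterZ f k y)) Filter.atBot (nhds 0)}

/-- Local (`ε`-local) stable set of `x`. -/
def WsLoc (f : M ≃ₜ M) (ε : ℝ) (x : M) : Set M :=
  {y | ∀ k : ℤ, 0 ≤ k → dist (iterZ f k x) (iterZ f k y) ≤ ε}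

/-- Local (`ε`-local) unstable set of `x`. -/
def WuLoc (f : M ≃ₜ M) (ε : ℝ) (x : M) : Set M :=
  {y | ∀ k : ℤ, k ≤ 0 → dist (iterZ f k x) (iterZ f k y) ≤ ε}

/-- The model space `ℝ^r × ℝ^{n-r}`. -/
abbrev ModelSp (n r : ℕ) := (Fin r → ℝ) × (Fin (n - r) → ℝ)

/-- The model hyperbolic linear map `L(a,b) = (a/2, 2b)`. -/
noncomputable def modelL (n r : ℕ) : ModelSp n r → ModelSp n r :=
  fun q => (fun i => q.1 i / 2, fun i => 2 * q.2 i)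

/-- Topologically hyperbolic periodic points of index `r` (`Per_H^r`). -/
def PerHr (f : M ≃ₜ M) (n r : ℕ) : Set M :=
  {p | ∃ l : ℕ, 1 ≤ l ∧ (f.toEquiv ^ l) p = p ∧
    ∃ (U : Set M) (V : Set (ModelSp n r)) (h : U ≃ₜ V),
      IsOpen U ∧ IsOpen V ∧ (0 : ModelSp n r) ∈ V ∧
      ∃ hp : p ∈ U, ((h ⟨p, hp⟩ : V) : ModelSp n r) = 0 ∧
        ∀ z : M, ∀ hz : z ∈ U, ∀ hz' : (f.toEquiv ^ l) z ∈ U,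
          ((h ⟨(f.toEquiv ^ l) z, hz'⟩ : V) : ModelSp n r) = modelL n r (h ⟨z, hz⟩)}

/-- All topologically hyperbolic periodic points (`Per_H`). -/
def PerH (f : M ≃ₜ M) (n : ℕ) : Set M := ⋃ r ∈ Finset.range (n + 1), PerHr f n r

/-- `p` admits a local product structure. -/
def AdmitsLPS (f : M ≃ₜ M) (n : ℕ) (p : M) : Prop :=
  ∃ (k : ℕ) (h : (Fin k → ℝ) × (Fin (n - k) → ℝ) → M) (ε : ℝ),
    0 < ε ∧ Topology.IsEmbedding h ∧ p ∈ Set.range h ∧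
    ∀ x : Fin k → ℝ, ∀ y : Fin (n - k) → ℝ,
      h '' ({x} ×ˢ univ) = WsLoc f ε (h (x, y)) ∩ Set.range h ∧
      h '' (univ ×ˢ {y}) = WuLoc f ε (h (x, y)) ∩ Set.range h

/-!
Suppose that `p` is an isolated singularity. On a small closed neighbourhood `B` of `p` the
relations `y ∈ W^s_α(x)` and `y ∈ W^u_α(x)` are closed equivalence relations, and by the density
of the hyperbolic periodic points every other point of `B` has a box in which the stable plaques
have dimension `n - 1` and the unstable plaques dimension `1`.

The unstable plaques of periodic points leave `B`. By compactness, such a plaque starting close to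
`p` stays close to the plaque of `p` until it has left a smaller neighbourhood, so it meets a
stable plaque through some point `q ≠ p` of the unstable plaque of `p`. The set of points whose
unstable plaque meets the stable plaque of `q` is closed, and, since unstable plaques are
one-dimensional, it is open away from the plaque of `p`. Removing an unstable plaque from a box
leaves a connected set because the stable plaques have dimension at least `2`. Hence all unstable
plaques near `p` meet the stable plaque of `q`, which therefore parametrises them, and in the same
way a stable plaque near `p` meets every unstable plaque near `p`. The resulting bracket is a
product parametrisation at `p`, which is open by invariance of domain, so `p` is not singular.
-/

/-! ### Invariance of domain -/

section Determinant

variable {E : Type*} [NormedAddCommGroup E] [NormedSpace ℝ E]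

lemma exists_polynomial_eval_eq_det_id_add_smul {V : Type*} [AddCommGroup V] [Module ℝ V]
    [FiniteDimensional ℝ V] (A : V →ₗ[ℝ] V) :
    ∃ P : Polynomial ℝ, P.natDegree ≤ Module.finrank ℝ V ∧
      ∀ s : ℝ, P.eval s = LinearMap.det (LinearMap.id + s • A) := by
  let b := Module.finBasis ℝ V
  let B := LinearMap.toMatrix b b A
  refine ⟨Matrix.det ((Polynomial.X : Polynomial ℝ) • B.map Polynomial.C +
    (1 : Matrix _ _ ℝ).map Polynomial.C), ?_, fun s ↦ ?_⟩
  · simpa using Polynomial.natDegree_det_X_add_C_le B 1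
  · rw [← LinearMap.det_toMatrix b, ← Polynomial.coe_evalRingHom, RingHom.map_det]
    congr 1
    ext i j
    by_cases hij : i = j <;> simp [B, hij, add_comm, mul_comm s]

lemma exists_weights_polynomial_eval_one (d : ℕ) {c : ℝ} (hc : 0 < c) :
    ∃ w t : ℕ → ℝ, (∀ j, t j ∈ Ioc 0 c) ∧
      ∀ P : Polynomial ℝ, P.natDegree ≤ d →
        P.eval 1 = ∑ j ∈ Finset.range (d + 1), w j * P.eval (t j) := by
  let t : ℕ → ℝ := fun j ↦ c / (j + 1)
  have ht : Function.Injective t := fun i j hij ↦ by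
    simpa [t, div_eq_mul_inv, hc.ne'] using hij
  refine ⟨fun j ↦ (Lagrange.basis (Finset.range (d + 1)) t j).eval 1, t, fun j ↦ ⟨?_, ?_⟩,
    fun P hP ↦ ?_⟩
  · positivity
  · exact div_le_self hc.le (by simp)
  · have hdeg : P.degree < (Finset.range (d + 1)).card := by
      rw [Finset.card_range]
      exact Polynomial.degree_le_natDegree.trans_lt (by exact_mod_cast Nat.lt_succ_of_le hP)
    conv_lhs => rw [Lagrange.eq_interpolate ht.injOn hdeg, Lagrange.interpolate_apply,
      Polynomial.eval_finsetSum]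
    simp [mul_comm]

lemma continuous_det_id_add_smul {X : Type*} [TopologicalSpace X] {s : X → ℝ} {A : X → E →L[ℝ] E}
    (hs : Continuous s) (hA : Continuous A) :
    Continuous fun x ↦ (ContinuousLinearMap.id ℝ E + s x • A x).det :=
  ContinuousLinearMap.continuous_det.comp (by fun_prop)

lemma det_id_add_pos_of_norm_lt_one [FiniteDimensional ℝ E] {A : E →L[ℝ] E} (hA : ‖A‖ < 1) :
    0 < (ContinuousLinearMap.id ℝ E + A).det := by
  have hne : ∀ s ∈ Icc (0 : ℝ) 1, (ContinuousLinearMap.id ℝ E + s • A).det ≠ 0 := fun s hs ↦ by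
    have hnorm : ‖-(s • A)‖ < 1 := by
      rw [norm_neg, norm_smul, Real.norm_of_nonneg hs.1]
      exact (mul_le_of_le_one_left (norm_nonneg A) hs.2).trans_lt hA
    have hunit := isUnit_one_sub_of_norm_lt_one hnorm
    rw [sub_neg_eq_add] at hunit
    exact ((hunit.map ContinuousLinearMap.toLinearMapRingHom).map LinearMap.det).ne_zero
  by_contra! hneg
  obtain ⟨s, hs, hs0⟩ := intermediate_value_Icc' (zero_le_one (α := ℝ))
    (continuous_det_id_add_smul (E := E) continuous_id (continuous_const (y := A))).continuousOn
    (show (0 : ℝ) ∈ Icc _ _ from ⟨by simpa using hneg, by simp [ContinuousLinearMap.det]⟩)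
  exact hne s hs hs0

end Determinant

lemma exists_mem_frontier_of_isPreconnected {X : Type*} [TopologicalSpace X] {C Ω : Set X}
    (hC : IsPreconnected C) {x y : X} (hxC : x ∈ C) (hx : x ∈ Ω) (hyC : y ∈ C) (hy : y ∉ Ω) :
    ∃ z ∈ C, z ∈ frontier Ω := by
  by_contra! h
  have hcover : C ⊆ interior Ω ∪ (closure Ω)ᶜ := fun z hz ↦ by
    by_cases hzΩ : z ∈ interior Ω
    · exact Or.inl hzΩ
    · exact Or.inr fun hz' ↦ h z hz ⟨hz', hzΩ⟩
  have hxi : x ∈ interior Ω := (hcover hxC).resolve_right fun h ↦ h (subset_closure hx)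
  have hyi : y ∈ (closure Ω)ᶜ := (hcover hyC).resolve_left fun h ↦ hy (interior_subset h)
  obtain ⟨z, -, hz, hz'⟩ :=
    hC _ _ isOpen_interior isClosed_closure.isOpen_compl hcover ⟨x, hxC, hxi⟩ ⟨y, hyC, hyi⟩
  exact hz' (interior_subset_closure hz)

lemma lipschitzWith_indicator_of_eqOn_frontier {E F : Type*} [NormedAddCommGroup E]
    [NormedSpace ℝ E] [NormedAddCommGroup F] {Ω : Set E} {h : E → F} {K : NNReal}
    (hK : LipschitzOnWith K h (closure Ω)) (h0 : EqOn h 0 (frontier Ω)) :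
    LipschitzWith K (Ω.indicator h) := by
  have cross : ∀ x ∈ Ω, ∀ y ∉ Ω, dist (h x) 0 ≤ K * dist x y := fun x hx y hy ↦ by
    obtain ⟨z, hz, hzΩ⟩ := exists_mem_frontier_of_isPreconnected
      (convex_segment x y).isPreconnected (left_mem_segment ℝ x y) hx (right_mem_segment ℝ x y) hy
    calc dist (h x) 0 = dist (h x) (h z) := by rw [h0 hzΩ, Pi.zero_apply]
      _ ≤ K * dist x z := hK.dist_le_mul x (subset_closure hx) z hzΩ.1
      _ ≤ K * dist x y := by
        have := dist_add_dist_of_mem_segment hz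
        gcongr
        linarith [dist_nonneg (x := z) (y := y)]
  refine LipschitzWith.of_dist_le_mul fun x y ↦ ?_
  by_cases hx : x ∈ Ω <;> by_cases hy : y ∈ Ω <;>
    simp only [indicator_of_mem, indicator_of_notMem, hx, hy, not_false_eq_true]
  · exact hK.dist_le_mul x (subset_closure hx) y (subset_closure hy)
  · exact cross x hx y hy
  · simpa only [dist_comm] using cross y hy x hx
  · simp only [dist_self]; positivity

section ChangeOfVariables

open MeasureTheory

lemma bijective_add_smul_of_lipschitzWith {E : Type*} [NormedAddCommGroup E] [NormedSpace ℝ E]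
    [CompleteSpace E] {h : E → E} {K : NNReal} (hK : LipschitzWith K h) {t : ℝ} (ht : 0 ≤ t)
    (htK : t * K < 1) : Function.Bijective fun x ↦ x + t • h x := by
  have happ : ApproximatesLinearOn (fun x ↦ x + t • h x)
      (ContinuousLinearEquiv.refl ℝ E : E →L[ℝ] E) univ (t.toNNReal * K) := fun x _ y _ ↦ by
    have hsub : x + t • h x - (y + t • h y) - (x - y) = t • (h x - h y) := by
      rw [smul_sub]; abel
    simp only [ContinuousLinearEquiv.coe_refl, ContinuousLinearMap.id_apply, hsub]
    rw [norm_smul, Real.norm_of_nonneg ht, NNReal.coe_mul, Real.coe_toNNReal t ht, mul_assoc]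
    exact mul_le_mul_of_nonneg_left (by simpa only [dist_eq_norm] using hK.dist_le_mul x y) ht
  have hc : Subsingleton E ∨
      t.toNNReal * K < ‖((ContinuousLinearEquiv.refl ℝ E).symm : E →L[ℝ] E)‖₊⁻¹ := by
    rcases subsingleton_or_nontrivial E with hE | _
    · exact .inl hE
    right
    rw [← NNReal.coe_lt_coe, NNReal.coe_mul, Real.coe_toNNReal t ht]
    have hid : ‖ContinuousLinearMap.id ℝ E‖ = 1 := ContinuousLinearMap.norm_id
    simpa [hid] using htK
  exact ⟨injOn_univ.mp (injOn_iff_injective.mpr (happ.injective hc)), happ.surjective hc⟩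

variable {E : Type*} [NormedAddCommGroup E] [NormedSpace ℝ E] [FiniteDimensional ℝ E]
  [MeasurableSpace E] [BorelSpace E]

-- For small `t` the map `x ↦ x + t • h x` permutes `Ω`, so this is the change of variables formula.
lemma setIntegral_det_id_add_smul_fderiv (μ : Measure E) [μ.IsAddHaarMeasure]
    {Ω : Set E} (hΩ : IsOpen Ω) {h : E → E} {K : NNReal}
    (hd : DifferentiableOn ℝ h Ω) (hK : LipschitzOnWith K h (closure Ω))
    (h0 : EqOn h 0 (frontier Ω)) {t : ℝ} (ht : 0 ≤ t) (htK : t * K < 1) :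
    ∫ x in Ω, (ContinuousLinearMap.id ℝ E + t • fderiv ℝ h x).det ∂μ = μ.real Ω := by
  let F : E → E := fun x ↦ x + t • Ω.indicator h x
  have hF : Function.Bijective F := bijective_add_smul_of_lipschitzWith
    (lipschitzWith_indicator_of_eqOn_frontier hK h0) ht htK
  have hfix : ∀ x ∉ Ω, F x = x := fun x hx ↦ by simp [F, hx]
  have himage : F '' Ω = Ω := by
    rw [← compl_inj_iff, ← image_compl_eq hF]
    exact (image_congr hfix).trans (image_id _)
  have hderiv : ∀ x ∈ Ω, HasFDerivWithinAt F
      (ContinuousLinearMap.id ℝ E + t • fderiv ℝ h x) Ω x := fun x hx ↦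
    ((hasFDerivAt_id x).add
      ((hd.differentiableAt (hΩ.mem_nhds hx)).hasFDerivAt.const_smul t)).hasFDerivWithinAt.congr
      (fun y hy ↦ by simp [F, hy]) (by simp [F, hx])
  have hdet : ∀ x ∈ Ω, 0 < (ContinuousLinearMap.id ℝ E + t • fderiv ℝ h x).det := fun x hx ↦ by
    refine det_id_add_pos_of_norm_lt_one ?_
    rw [norm_smul, Real.norm_of_nonneg ht]
    refine (mul_le_mul_of_nonneg_left ?_ ht).trans_lt htK
    exact norm_fderiv_le_of_lipschitzOn ℝ
      (Filter.mem_of_superset (hΩ.mem_nhds hx) subset_closure) hK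
  have hchange := integral_image_eq_integral_abs_det_fderiv_smul μ hΩ.measurableSet hderiv
    hF.injective.injOn (fun _ ↦ (1 : ℝ))
  calc ∫ x in Ω, (ContinuousLinearMap.id ℝ E + t • fderiv ℝ h x).det ∂μ
      = ∫ x in Ω, |(ContinuousLinearMap.id ℝ E + t • fderiv ℝ h x).det| • (1 : ℝ) ∂μ :=
        setIntegral_congr_fun hΩ.measurableSet fun x hx ↦ by
          simp only [abs_of_pos (hdet x hx), smul_eq_mul, mul_one]
    _ = ∫ _ in F '' Ω, (1 : ℝ) ∂μ := hchange.symm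
    _ = μ.real Ω := by simp [himage]

-- The integral below is a polynomial in the factor of `fderiv ℝ h x`, and it is constant for
-- small factors.
lemma setIntegral_det_id_add_fderiv (μ : Measure E) [μ.IsAddHaarMeasure]
    {Ω : Set E} (hΩ : IsOpen Ω) (hb : Bornology.IsBounded Ω) {h : E → E} {K : NNReal}
    (hd : ContDiff ℝ 1 h) (hK : LipschitzOnWith K h (closure Ω)) (h0 : EqOn h 0 (frontier Ω)) :
    ∫ x in Ω, (ContinuousLinearMap.id ℝ E + fderiv ℝ h x).det ∂μ = μ.real Ω := by
  obtain ⟨w, t, ht, hw⟩ :=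
    exists_weights_polynomial_eval_one (Module.finrank ℝ E) (c := 1 / (K + 1)) (by positivity)
  have hdet : ∀ A : E →L[ℝ] E, (ContinuousLinearMap.id ℝ E + A).det =
      ∑ j ∈ Finset.range (Module.finrank ℝ E + 1),
        w j * (ContinuousLinearMap.id ℝ E + t j • A).det := fun A ↦ by
    obtain ⟨P, hP, hPA⟩ := exists_polynomial_eval_eq_det_id_add_smul (A : E →ₗ[ℝ] E)
    simpa [hPA, ContinuousLinearMap.det] using hw P hP
  have hint : ∀ s : ℝ, IntegrableOn
      (fun x ↦ (ContinuousLinearMap.id ℝ E + s • fderiv ℝ h x).det) Ω μ := fun s ↦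
    ((continuous_det_id_add_smul continuous_const
      (hd.continuous_fderiv one_ne_zero)).continuousOn.integrableOn_compact
        hb.isCompact_closure).mono_set subset_closure
  have hsmall : ∀ j, ∫ x in Ω, (ContinuousLinearMap.id ℝ E + t j • fderiv ℝ h x).det ∂μ =
      μ.real Ω := fun j ↦ by
    refine setIntegral_det_id_add_smul_fderiv μ hΩ
      (hd.differentiable one_ne_zero).differentiableOn hK h0 (ht j).1.le ?_
    calc t j * K ≤ 1 / (K + 1) * K := by gcongr; exact (ht j).2
      _ < 1 := by rw [one_div, inv_mul_lt_iff₀ (by positivity)]; linarith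
  calc ∫ x in Ω, (ContinuousLinearMap.id ℝ E + fderiv ℝ h x).det ∂μ
      = ∑ j ∈ Finset.range (Module.finrank ℝ E + 1), w j * μ.real Ω := by
        rw [setIntegral_congr_fun hΩ.measurableSet fun x _ ↦ hdet (fderiv ℝ h x),
          integral_finsetSum _ fun j _ ↦ (hint (t j)).const_mul (w j)]
        simp only [integral_const_mul, hsmall]
    _ = μ.real Ω := by
        have hsum := hw 1 (by simp)
        simp only [Polynomial.eval_one, mul_one] at hsum
        rw [← Finset.sum_mul, ← hsum, one_mul]

end ChangeOfVariables

section NoRetraction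

open MeasureTheory

variable {E : Type*} [NormedAddCommGroup E] [InnerProductSpace ℝ E]

lemma det_fderiv_eq_zero_of_norm_eventually_const [FiniteDimensional ℝ E] {g : E → E} {x : E}
    {r : ℝ} (hr : r ≠ 0) (hg : DifferentiableAt ℝ g x) (hconst : ∀ᶠ y in nhds x, ‖g y‖ = r) :
    (fderiv ℝ g x).det = 0 := by
  by_contra hdet
  obtain ⟨v, hv⟩ : ∃ v, fderiv ℝ g x v = g x :=
    (LinearMap.equivOfDetNeZero (fderiv ℝ g x : E →ₗ[ℝ] E) hdet).surjective (g x)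
  have hsq : HasFDerivAt (fun y ↦ inner ℝ (g y) (g y)) (0 : E →L[ℝ] ℝ) x :=
    (hasFDerivAt_const (r ^ 2) x).congr_of_eventuallyEq <| by
      filter_upwards [hconst] with y hy
      rw [real_inner_self_eq_norm_sq, hy]
  have hgx : g x = 0 := by
    simpa [hv] using DFunLike.congr_fun ((hg.hasFDerivAt.inner ℝ hg.hasFDerivAt).unique hsq) v
  exact hr (by simpa [hgx] using hconst.self_of_nhds.symm)

lemma not_contDiff_retraction_sphere [FiniteDimensional ℝ E] {R : ℝ} (hR : 0 < R) {g : E → E}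
    (hg : ContDiff ℝ 1 g) (hid : ∀ x ∈ sphere (0 : E) R, g x = x) :
    ¬ ∀ x ∈ ball (0 : E) R, ‖g x‖ = R := by
  intro hnorm
  borelize E
  let h : E → E := fun x ↦ g x - x
  have hh : ContDiff ℝ 1 h := hg.sub contDiff_id
  obtain ⟨K, hK⟩ := hh.contDiffOn.exists_lipschitzOnWith one_ne_zero
    (convex_closedBall (0 : E) R) (isCompact_closedBall _ _)
  have hvol := setIntegral_det_id_add_fderiv volume isOpen_ball isBounded_ball hh
    (hK.mono closure_ball_subset_closedBall)
    (fun x hx ↦ sub_eq_zero.mpr (hid x (frontier_ball_subset_sphere hx)))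
  have hzero : ∀ x ∈ ball (0 : E) R,
      (ContinuousLinearMap.id ℝ E + fderiv ℝ h x).det = 0 := fun x hx ↦ by
    have hgx : DifferentiableAt ℝ g x := hg.differentiable one_ne_zero x
    have hfderiv : fderiv ℝ h x = fderiv ℝ g x - ContinuousLinearMap.id ℝ E :=
      (hgx.hasFDerivAt.sub (hasFDerivAt_id x)).fderiv
    rw [hfderiv, add_sub_cancel]
    exact det_fderiv_eq_zero_of_norm_eventually_const hR.ne' hgx
      (Filter.mem_of_superset (isOpen_ball.mem_nhds hx) hnorm)
  rw [setIntegral_congr_fun measurableSet_ball hzero, integral_zero] at hvol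
  exact (ENNReal.toReal_pos (measure_ball_pos volume (0 : E) hR).ne' measure_ball_lt_top.ne).ne hvol

end NoRetraction

section InvarianceOfDomain

open MeasureTheory

variable {E : Type*} [NormedAddCommGroup E] [InnerProductSpace ℝ E] [FiniteDimensional ℝ E]

-- A zero-free continuous map equal to the identity near infinity would normalise to a smooth
-- retraction of a large ball onto its boundary sphere.
lemma exists_eq_zero_of_eq_self_of_le_norm {F : E → E} (hF : Continuous F) {R : ℝ} (hR : 0 < R)
    (hid : ∀ x, R ≤ ‖x‖ → F x = x) : ∃ x, F x = 0 := by
  by_contra! hF0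
  obtain ⟨G, hG, hdist, hGF, -⟩ := hF.exists_contDiff_approx_and_eqOn 1
    (ε := fun x ↦ ‖F x‖) (by fun_prop) (fun x ↦ norm_pos_iff.mpr (hF0 x))
    (S := {x | 2 * R ≤ ‖x‖}) (U := {x | R < ‖x‖}) (isClosed_le continuous_const continuous_norm)
    ((isOpen_lt continuous_const continuous_norm).mem_nhdsSet.mpr fun x (hx : 2 * R ≤ ‖x‖) ↦
      show R < ‖x‖ by linarith)
    (contDiffOn_id.congr fun x hx ↦ hid x (le_of_lt hx))
  have hG0 : ∀ x, G x ≠ 0 := fun x hx ↦ by simpa [hx] using hdist x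
  refine not_contDiff_retraction_sphere (g := fun x ↦ (2 * R * ‖G x‖⁻¹) • G x)
    (show 0 < 2 * R by positivity) ?_ (fun x hx ↦ ?_) fun x _ ↦ ?_
  · exact (contDiff_const.mul ((hG.norm ℝ hG0).inv fun x ↦ norm_ne_zero_iff.mpr (hG0 x))).smul hG
  · have hnorm : ‖x‖ = 2 * R := mem_sphere_zero_iff_norm.mp hx
    have hGx : G x = x := (hGF hnorm.ge).trans (hid x (by linarith))
    simp only [hGx, hnorm, mul_inv_cancel₀ (show 2 * R ≠ 0 by positivity), one_smul]
  · rw [norm_smul, norm_mul, norm_inv, norm_norm, Real.norm_of_nonneg (by positivity : 0 ≤ 2 * R),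
      inv_mul_cancel_right₀ (norm_ne_zero_iff.mpr (hG0 x))]

-- Extend `ψ - id` radially beyond the ball of radius `R` and cut it off at radius `2 * R`.
lemma exists_eq_zero_of_norm_sub_lt {ψ : E → E} {R : ℝ} (hR : 0 < R)
    (hψ : ContinuousOn ψ (closedBall 0 R)) (hdist : ∀ x ∈ sphere (0 : E) R, ‖ψ x - x‖ < R) :
    ∃ x ∈ closedBall (0 : E) R, ψ x = 0 := by
  let π : E → E := fun x ↦ (R / max R ‖x‖) • x
  have hmax : ∀ x : E, 0 < max R ‖x‖ := fun x ↦ lt_max_of_lt_left hR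
  have hπ : Continuous π := by
    have : ∀ x : E, max R ‖x‖ ≠ 0 := fun x ↦ (hmax x).ne'
    fun_prop (disch := assumption)
  have hπnorm : ∀ x, ‖π x‖ = R / max R ‖x‖ * ‖x‖ := fun x ↦ by
    rw [norm_smul, Real.norm_of_nonneg (div_nonneg hR.le (hmax x).le)]
  have hπball : ∀ x, π x ∈ closedBall (0 : E) R := fun x ↦ by
    rw [mem_closedBall_zero_iff, hπnorm, div_mul_eq_mul_div, div_le_iff₀ (hmax x)]
    gcongr
    exact le_max_right _ _
  have hπin : ∀ x, ‖x‖ ≤ R → π x = x := fun x hx ↦ by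
    simp only [π, max_eq_left hx, div_self hR.ne', one_smul]
  have hπout : ∀ x, R ≤ ‖x‖ → π x ∈ sphere (0 : E) R := fun x hx ↦ by
    rw [mem_sphere_zero_iff_norm, hπnorm, max_eq_right hx, div_mul_cancel₀ _ (hR.trans_le hx).ne']
  let χ : E → ℝ := fun x ↦ max 0 (min 1 (2 - ‖x‖ / R))
  let F : E → E := fun x ↦ x + χ x • (ψ (π x) - π x)
  have hF : Continuous F := by
    have hχ : Continuous χ := by fun_prop
    exact continuous_id.add (hχ.smul ((hψ.comp_continuous hπ hπball).sub hπ))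
  obtain ⟨x, hx⟩ := exists_eq_zero_of_eq_self_of_le_norm hF (show 0 < 2 * R by positivity)
    fun x hx ↦ by
      have : 2 - ‖x‖ / R ≤ 0 := by rw [sub_nonpos, le_div_iff₀ hR]; exact hx
      simp only [F, χ, max_eq_left ((min_le_right _ _).trans this), zero_smul, add_zero]
  rcases le_or_gt ‖x‖ R with hxR | hxR
  · have hχ : χ x = 1 := by
      have : ‖x‖ / R ≤ 1 := (div_le_one hR).mpr hxR
      simp only [χ, min_eq_left (by linarith : 1 ≤ 2 - ‖x‖ / R), max_eq_right zero_le_one]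
    refine ⟨x, mem_closedBall_zero_iff.mpr hxR, ?_⟩
    simpa only [F, hχ, hπin x hxR, one_smul, add_sub_cancel] using hx
  · have hχ : |χ x| ≤ 1 := by
      rw [abs_of_nonneg (le_max_left _ _)]
      exact max_le zero_le_one (min_le_left _ _)
    have : ‖x‖ < R := calc
      ‖x‖ = ‖χ x • (ψ (π x) - π x)‖ := by
        rw [← norm_neg, neg_eq_of_add_eq_zero_right hx]
      _ = |χ x| * ‖ψ (π x) - π x‖ := by rw [norm_smul, Real.norm_eq_abs]
      _ ≤ ‖ψ (π x) - π x‖ := mul_le_of_le_one_left (norm_nonneg _) hχ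
      _ < R := hdist _ (hπout x hxR.le)
    exact absurd this hxR.not_gt

end InvarianceOfDomain

lemma exists_pos_le_norm_of_isCompact {X E : Type*} [TopologicalSpace X]
    [NormedAddCommGroup E] {S : Set X}
    (hS : IsCompact S) {G : X → E} (hG : ContinuousOn G S) (h0 : ∀ y ∈ S, G y ≠ 0) :
    ∃ m > 0, ∀ y ∈ S, m ≤ ‖G y‖ := by
  rcases S.eq_empty_or_nonempty with rfl | hne
  · exact ⟨1, one_pos, by simp⟩
  · obtain ⟨y, hy, hmin⟩ := hS.exists_isMinOn hne hG.norm
    exact ⟨‖G y‖, norm_pos_iff.mpr (h0 y hy), fun z hz ↦ hmin hz⟩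

section NormedSpace

open MeasureTheory

variable {E : Type*} [NormedAddCommGroup E] [NormedSpace ℝ E]

lemma exists_contDiff_approx_ne_zero_on_sphere [FiniteDimensional ℝ E] {G : E → E}
    (hG : Continuous G) (c : E) {ε δ : ℝ} (hε : ε ≠ 0) (hδ : 0 < δ) :
    ∃ P : E → E, ContDiff ℝ 1 P ∧ (∀ y, ‖P y - G y‖ < δ) ∧ ∀ y ∈ sphere c ε, P y ≠ 0 := by
  borelize E
  let μ : Measure E := Measure.addHaar
  obtain ⟨P, hP, hPG, -⟩ := hG.exists_contDiff_approx 1 (ε := fun _ ↦ δ / 2) continuous_const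
    fun _ ↦ half_pos hδ
  have hnull : μ (P '' sphere c ε) = 0 :=
    addHaar_image_eq_zero_of_differentiableOn_of_addHaar_eq_zero μ
      (hP.differentiable one_ne_zero).differentiableOn (μ.addHaar_sphere_of_ne_zero c hε)
  obtain ⟨a, ha, haP⟩ : ∃ a ∈ ball (0 : E) (δ / 2), a ∉ P '' sphere c ε :=
    not_subset.mp fun hsub ↦
      (measure_ball_pos μ (0 : E) (half_pos hδ)).ne' (measure_mono_null hsub hnull)
  refine ⟨fun y ↦ P y - a, hP.sub contDiff_const, fun y ↦ ?_, fun y hy h ↦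
    haP ⟨y, hy, sub_eq_zero.mp h⟩⟩
  calc ‖P y - a - G y‖ = ‖P y - G y - a‖ := by rw [sub_right_comm]
    _ ≤ ‖P y - G y‖ + ‖a‖ := norm_sub_le _ _
    _ < δ / 2 + δ / 2 := add_lt_add (by simpa only [dist_eq_norm] using hPG y)
        (mem_ball_zero_iff.mp ha)
    _ = δ := add_halves δ

lemma exists_retraction_compl_ball (c : E) {ε : ℝ} (hε : 0 < ε) :
    ∃ ρ : E → E, ContinuousOn ρ {c}ᶜ ∧ (∀ y, ε ≤ dist y c → ρ y = y) ∧
      ∀ y, y ≠ c → dist y c ≤ ε → ρ y ∈ sphere c ε := by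
  refine ⟨fun y ↦ c + (max ε ‖y - c‖ / ‖y - c‖) • (y - c), ?_, fun y hy ↦ ?_, fun y hyc hy ↦ ?_⟩
  · have : ∀ y ∈ ({c}ᶜ : Set E), ‖y - c‖ ≠ 0 := fun y hy ↦ norm_ne_zero_iff.mpr (sub_ne_zero.mpr hy)
    exact continuousOn_const.add (((by fun_prop : Continuous fun y ↦ max ε ‖y - c‖).continuousOn.div
      (by fun_prop) this).smul (by fun_prop))
  · rw [dist_eq_norm] at hy
    simp only [max_eq_right hy, div_self (hε.trans_le hy).ne', one_smul, add_sub_cancel]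
  · rw [dist_eq_norm] at hy
    have : ‖y - c‖ ≠ 0 := norm_ne_zero_iff.mpr (sub_ne_zero.mpr hyc)
    rw [mem_sphere, dist_eq_norm, add_sub_cancel_left, norm_smul, norm_div, norm_norm,
      max_eq_left hy, Real.norm_of_nonneg hε.le, div_mul_cancel₀ _ this]

-- Push `K` off a small ball around a point `c ∉ K` near `y₀`, then perturb `G` smoothly: it stays
-- nonzero away from the ball, and generically it misses `0` on the boundary sphere.
lemma exists_approx_ne_zero_of_notMem_interior [FiniteDimensional ℝ E] {K : Set E}
    (hK : IsCompact K) {y₀ : E} (hy₀ : y₀ ∉ interior K) {G : E → E} (hG : Continuous G)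
    (hG0 : ∀ y ∈ K, y ≠ y₀ → G y ≠ 0) {δ : ℝ} (hδ : 0 < δ) :
    ∃ Q : E → E, ContinuousOn Q K ∧ ∀ y ∈ K, ‖Q y - G y‖ < δ ∧ Q y ≠ 0 := by
  obtain ⟨ε', hε', hGε⟩ := Metric.continuousAt_iff.mp (hG.continuousAt (x := y₀)) (δ / 4)
    (by positivity)
  let ε := ε' / 2
  have hε : 0 < ε := by positivity
  obtain ⟨c, hc, hcK⟩ : ∃ c ∈ ball y₀ ε, c ∉ K := not_subset.mp fun hsub ↦
    hy₀ (mem_interior_iff_mem_nhds.mpr (Filter.mem_of_superset (ball_mem_nhds y₀ hε) hsub))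
  have hnear : ∀ y, dist y c ≤ ε → dist (G y) (G y₀) < δ / 4 := fun y hy ↦ hGε <| by
    linarith [dist_triangle y c y₀, mem_ball.mp hc, show ε = ε' / 2 from rfl]
  obtain ⟨ρ, hρ, hρfar, hρnear⟩ := exists_retraction_compl_ball c hε
  obtain ⟨m, hm, hmG⟩ := exists_pos_le_norm_of_isCompact (S := K ∩ {y | ε ≤ dist y c})
    (hK.inter_right (isClosed_le continuous_const (by fun_prop))) hG.continuousOn
    fun y hy ↦ hG0 y hy.1 fun h ↦ (mem_ball'.mp hc).not_ge (h ▸ hy.2)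
  obtain ⟨P, hP, hPG, hP0⟩ := exists_contDiff_approx_ne_zero_on_sphere hG c hε.ne'
    (lt_min hm (show 0 < δ / 4 by positivity))
  have hPδ : ∀ y, ‖P y - G y‖ < δ / 4 := fun y ↦ (hPG y).trans_le (min_le_right _ _)
  refine ⟨P ∘ ρ, hP.continuous.comp_continuousOn (hρ.mono fun y hy h ↦ hcK (h ▸ hy)),
    fun y hy ↦ ?_⟩
  have hyc : y ≠ c := fun h ↦ hcK (h ▸ hy)
  simp only [Function.comp_apply]
  rcases le_total ε (dist y c) with hfar | hclose
  · rw [hρfar y hfar]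
    refine ⟨by linarith [hPδ y], fun h0 ↦ ?_⟩
    have hlt : ‖G y‖ < m := by simpa [h0] using (hPG y).trans_le (min_le_left _ _)
    exact hlt.not_ge (hmG y ⟨hy, hfar⟩)
  · refine ⟨?_, hP0 _ (hρnear y hyc hclose)⟩
    have h₁ := hnear (ρ y) (mem_sphere.mp (hρnear y hyc hclose)).le
    have h₂ := hnear y hclose
    have h₃ := hPδ (ρ y)
    rw [← dist_eq_norm] at h₃ ⊢
    linarith [dist_triangle4_right (P (ρ y)) (G y) (G (ρ y)) (G y₀)]

end NormedSpace

universe u in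
lemma exists_continuousMap_leftInvOn {X : Type*} {Y : Type u} [TopologicalSpace X]
    [TopologicalSpace Y] [T4Space Y] [TietzeExtension.{u} X] {K : Set X} (hK : IsCompact K)
    {f : X → Y} (hf : ContinuousOn f K) (hinj : InjOn f K) : ∃ G : C(Y, X), LeftInvOn G f K := by
  have : CompactSpace K := isCompact_iff_compactSpace.mp hK
  obtain ⟨G, hG⟩ := ContinuousMap.exists_extension'
    (hf.domRestrict.isClosedEmbedding fun x y h ↦ Subtype.ext (hinj x.2 y.2 h))
    (⟨Subtype.val, continuous_subtype_val⟩ : C(K, X))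
  exact ⟨G, fun x hx ↦ congrFun hG ⟨x, hx⟩⟩

lemma mem_interior_image_closedBall_zero {E : Type*} [NormedAddCommGroup E] [InnerProductSpace ℝ E]
    [FiniteDimensional ℝ E] {f : E → E} {R : ℝ} (hR : 0 < R)
    (hf : ContinuousOn f (closedBall 0 R)) (hinj : InjOn f (closedBall 0 R)) :
    f 0 ∈ interior (f '' closedBall 0 R) := by
  by_contra hf0
  have hK : IsCompact (closedBall (0 : E) R) := isCompact_closedBall _ _
  obtain ⟨G, hG⟩ := exists_continuousMap_leftInvOn hK hf hinj
  obtain ⟨Q, hQ, hQG⟩ := exists_approx_ne_zero_of_notMem_interior (hK.image_of_continuousOn hf)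
    hf0 G.continuous (by rintro _ ⟨x, hx, rfl⟩ hne h0; exact hne (by rw [← hG hx, h0])) hR
  obtain ⟨x, hx, h0⟩ := exists_eq_zero_of_norm_sub_lt hR (hQ.comp hf (mapsTo_image f _))
    fun x hx ↦ by
      have hx' := sphere_subset_closedBall hx
      simpa only [Function.comp_apply, hG hx'] using (hQG _ (mem_image_of_mem f hx')).1
  exact (hQG _ (mem_image_of_mem f hx)).2 h0

lemma isOpen_image_of_injOn_of_innerProductSpace {E : Type*} [NormedAddCommGroup E]
    [InnerProductSpace ℝ E] [FiniteDimensional ℝ E] {U : Set E} (hU : IsOpen U) {f : E → E}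
    (hf : ContinuousOn f U) (hinj : InjOn f U) : IsOpen (f '' U) := by
  refine isOpen_iff_mem_nhds.mpr ?_
  rintro _ ⟨x, hx, rfl⟩
  obtain ⟨R, hR, hRU⟩ := Metric.nhds_basis_closedBall.mem_iff.mp (hU.mem_nhds hx)
  have hmaps : MapsTo (x + ·) (closedBall 0 R) U := fun v hv ↦ hRU (by simpa using hv)
  have hint := mem_interior_image_closedBall_zero hR
    (hf.comp (by fun_prop) hmaps) (hinj.comp (add_right_injective x).injOn hmaps)
  rw [Function.comp_apply, add_zero, image_comp] at hint
  exact Filter.mem_of_superset (mem_interior_iff_mem_nhds.mp hint)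
    (image_mono hmaps.image_subset)

lemma isOpen_image_of_injOn_of_finrank_eq {E F : Type*}
    [NormedAddCommGroup E] [NormedSpace ℝ E] [FiniteDimensional ℝ E]
    [NormedAddCommGroup F] [NormedSpace ℝ F] [FiniteDimensional ℝ F]
    (hEF : Module.finrank ℝ E = Module.finrank ℝ F) {U : Set E} (hU : IsOpen U) {f : E → F}
    (hf : ContinuousOn f U) (hinj : InjOn f U) : IsOpen (f '' U) := by
  let a : EuclideanSpace ℝ (Fin (Module.finrank ℝ E)) ≃L[ℝ] E :=
    ContinuousLinearEquiv.ofFinrankEq (by simp)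
  let b : F ≃L[ℝ] EuclideanSpace ℝ (Fin (Module.finrank ℝ E)) :=
    ContinuousLinearEquiv.ofFinrankEq (by simp [hEF])
  have himage : IsOpen ((b ∘ f ∘ a) '' (a ⁻¹' U)) :=
    isOpen_image_of_injOn_of_innerProductSpace (hU.preimage a.continuous)
      (b.continuous.comp_continuousOn (hf.comp a.continuous.continuousOn (mapsTo_preimage a U)))
      (b.injective.comp_injOn (hinj.comp a.injective.injOn (mapsTo_preimage a U)))
  rw [image_comp, image_comp, image_preimage_eq U a.surjective] at himage
  exact b.toHomeomorph.isOpen_image.mp himage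

lemma isOpen_image_of_injOn_of_chartedSpace {E H X : Type*}
    [NormedAddCommGroup E] [NormedSpace ℝ E] [FiniteDimensional ℝ E]
    [NormedAddCommGroup H] [NormedSpace ℝ H] [FiniteDimensional ℝ H]
    [TopologicalSpace X] [ChartedSpace H X] (hEH : Module.finrank ℝ E = Module.finrank ℝ H)
    {U : Set E} (hU : IsOpen U) {f : E → X} (hf : ContinuousOn f U) (hinj : InjOn f U) :
    IsOpen (f '' U) := by
  refine isOpen_iff_mem_nhds.mpr ?_
  rintro _ ⟨x, hx, rfl⟩
  let e := chartAt H (f x)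
  have himage : IsOpen ((e ∘ f) '' (U ∩ f ⁻¹' e.source)) :=
    isOpen_image_of_injOn_of_finrank_eq hEH (hf.isOpen_inter_preimage hU e.open_source)
      (e.continuousOn.comp (hf.mono inter_subset_left) fun y hy ↦ hy.2)
      (fun y hy z hz h ↦ hinj hy.1 hz.1 (e.injOn hy.2 hz.2 h))
  have hsub : e.source ∩ e ⁻¹' ((e ∘ f) '' (U ∩ f ⁻¹' e.source)) ⊆ f '' U := by
    rintro y ⟨hy, z, hz, hzy⟩
    exact ⟨z, hz.1, e.injOn hz.2 hy hzy⟩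
  have hfx : f x ∈ e.source := mem_chart_source H (f x)
  exact Filter.mem_of_superset
    ((e.continuousOn.isOpen_inter_preimage e.open_source himage).mem_nhds ⟨hfx, x, ⟨hx, hfx⟩, rfl⟩)
    hsub

/-! ### Local stable sets of an expansive homeomorphism -/

section Iterates

variable (f : M ≃ₜ M)

lemma iterZ_zero (x : M) : iterZ f 0 x = x := by
  simp only [iterZ, zpow_zero, Equiv.Perm.coe_one, id]

lemma iterZ_add (a b : ℤ) (x : M) : iterZ f (a + b) x = iterZ f a (iterZ f b x) := by
  simp only [iterZ, zpow_add, Equiv.Perm.mul_apply]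

lemma iterZ_natCast (l : ℕ) (x : M) : iterZ f l x = (f.toEquiv ^ l) x := by
  simp only [iterZ, zpow_natCast]

lemma iterZ_mul_natCast (a : ℤ) (k : ℕ) (x : M) : iterZ f (a * k) x = (iterZ f a)^[k] x := by
  simp only [iterZ, zpow_mul, zpow_natCast]
  rw [← Equiv.Perm.iterate_eq_pow]
  rfl

lemma iterZ_neg_iterZ (a : ℤ) (x : M) : iterZ f (-a) (iterZ f a x) = x := by
  rw [← iterZ_add, neg_add_cancel, iterZ_zero]

lemma iterZ_iterZ_neg (a : ℤ) (x : M) : iterZ f a (iterZ f (-a) x) = x := by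
  rw [← iterZ_add, add_neg_cancel, iterZ_zero]

lemma iterZ_symm (k : ℤ) (x : M) : iterZ f.symm k x = iterZ f (-k) x := by
  have hsymm : f.symm.toEquiv = (f.toEquiv)⁻¹ := rfl
  simp only [iterZ, hsymm, inv_zpow']

lemma iterZ_eq_zpow (k : ℤ) : iterZ f k = ⇑(f ^ k) := by
  let toPerm : (M ≃ₜ M) →* Equiv.Perm M :=
    { toFun := Homeomorph.toEquiv, map_one' := rfl, map_mul' := fun _ _ ↦ rfl }
  exact congrArg DFunLike.coe (map_zpow toPerm f k).symm

lemma continuous_iterZ (k : ℤ) : Continuous (iterZ f k) := iterZ_eq_zpow f k ▸ (f ^ k).continuous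

lemma injective_iterZ (k : ℤ) : Function.Injective (iterZ f k) :=
  iterZ_eq_zpow f k ▸ (f ^ k).injective

lemma continuous_dist_iterZ (k : ℤ) :
    Continuous fun a : M × M ↦ dist (iterZ f k a.1) (iterZ f k a.2) :=
  ((continuous_iterZ f k).comp continuous_fst).dist ((continuous_iterZ f k).comp continuous_snd)

end Iterates

section LocalStableSets

variable {f : M ≃ₜ M} {α ε ε' : ℝ} {x y z : M}

lemma WuLoc_eq_WsLoc_symm (f : M ≃ₜ M) (ε : ℝ) (x : M) : WuLoc f ε x = WsLoc f.symm ε x := by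
  ext y
  simp only [WuLoc, WsLoc, mem_ofPred_eq, iterZ_symm]
  exact ⟨fun h k hk ↦ h (-k) (by simpa using hk), fun h k hk ↦ by simpa using h (-k) (by simpa)⟩

lemma self_mem_WsLoc (f : M ≃ₜ M) (hε : 0 ≤ ε) (x : M) : x ∈ WsLoc f ε x := fun k _ ↦ by
  simpa only [dist_self] using hε

lemma WsLoc_mono (h : ε ≤ ε') : WsLoc f ε x ⊆ WsLoc f ε' x := fun _ hy k hk ↦ (hy k hk).trans h

lemma WsLoc_symm (h : y ∈ WsLoc f ε x) : x ∈ WsLoc f ε y := fun k hk ↦ by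
  rw [dist_comm]; exact h k hk

lemma WsLoc_trans (h : y ∈ WsLoc f ε x) (h' : z ∈ WsLoc f ε' y) : z ∈ WsLoc f (ε + ε') x :=
  fun k hk ↦ (dist_triangle _ _ _).trans (add_le_add (h k hk) (h' k hk))

lemma WsLoc_trans_half (h : y ∈ WsLoc f (ε / 2) x) (h' : z ∈ WsLoc f (ε / 2) y) :
    z ∈ WsLoc f ε x := add_halves ε ▸ WsLoc_trans h h'

lemma isClosed_setOf_mem_WsLoc (f : M ≃ₜ M) (ε : ℝ) :
    IsClosed {a : M × M | a.2 ∈ WsLoc f ε a.1} := by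
  change IsClosed {a : M × M | ∀ k : ℤ, 0 ≤ k → dist (iterZ f k a.1) (iterZ f k a.2) ≤ ε}
  simp only [ofPred_forall]
  exact isClosed_iInter fun k ↦ isClosed_iInter fun _ ↦
    isClosed_le (continuous_dist_iterZ f k) continuous_const

lemma IsExpansive.symm (h : IsExpansive f α) : IsExpansive f.symm α := fun x y hxy ↦ by
  obtain ⟨k, hk⟩ := h x y hxy
  exact ⟨-k, by simpa only [iterZ_symm, neg_neg] using hk⟩

lemma IsExpansive.eq_of_mem_WsLoc (h : IsExpansive f α) (hs : y ∈ WsLoc f α x)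
    (hu : y ∈ WsLoc f.symm α x) : x = y := by
  by_contra hne
  obtain ⟨k, hk⟩ := h x y hne
  rcases le_total 0 k with h0 | h0
  · exact (hs k h0).not_gt hk
  · have hle := hu (-k) (neg_nonneg.mpr h0)
    rw [iterZ_symm, iterZ_symm, neg_neg] at hle
    exact hle.not_gt hk

variable [CompactSpace M]

lemma IsExpansive.exists_dist_lt_of_forall_abs_le (h : IsExpansive f α) {η : ℝ} (hη : 0 < η) :
    ∃ N : ℕ, ∀ x y : M,
      (∀ j : ℤ, |j| ≤ N → dist (iterZ f j x) (iterZ f j y) ≤ α) → dist x y < η := by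
  have hcompact : IsCompact {a : M × M | η ≤ dist a.1 a.2} :=
    (isClosed_le continuous_const continuous_dist).isCompact
  obtain ⟨t, ht⟩ := hcompact.elim_finite_subcover
    (fun k : ℤ ↦ {a : M × M | α < dist (iterZ f k a.1) (iterZ f k a.2)})
    (fun k ↦ isOpen_lt continuous_const (continuous_dist_iterZ f k))
    (fun a ha ↦ mem_iUnion.mpr (h a.1 a.2 (dist_pos.mp (hη.trans_le ha))))
  refine ⟨t.sup Int.natAbs, fun x y hxy ↦ ?_⟩
  by_contra! hdist
  obtain ⟨k, hk, hα⟩ := mem_iUnion₂.mp (ht (mem_ofPred.mpr hdist : (x, y) ∈ {a | η ≤ dist a.1 a.2}))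
  refine (hxy k ?_).not_gt hα
  rw [Int.abs_eq_natAbs]
  exact_mod_cast Finset.le_sup (f := Int.natAbs) hk

lemma IsExpansive.exists_dist_iterZ_lt_of_mem_WsLoc (h : IsExpansive f α) {η : ℝ} (hη : 0 < η) :
    ∃ N : ℕ, ∀ x y : M, y ∈ WsLoc f α x → ∀ k : ℤ, N ≤ k →
      dist (iterZ f k x) (iterZ f k y) < η := by
  obtain ⟨N, hN⟩ := h.exists_dist_lt_of_forall_abs_le hη
  refine ⟨N, fun x y hxy k hk ↦ hN _ _ fun j hj ↦ ?_⟩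
  rw [← iterZ_add, ← iterZ_add]
  exact hxy _ (by linarith [neg_abs_le j])

lemma IsExpansive.exists_mem_WsLoc_of_dist_lt (h : IsExpansive f α) {η : ℝ} (hη : 0 < η) :
    ∃ ρ > 0, ∀ x y : M, y ∈ WsLoc f α x → dist x y < ρ → y ∈ WsLoc f η x := by
  obtain ⟨N, hN⟩ := h.exists_dist_iterZ_lt_of_mem_WsLoc hη
  have huniform : ∀ᶠ a in uniformity M, ∀ k ∈ Finset.range N,
      dist (iterZ f k a.1) (iterZ f k a.2) < η :=
    (Finset.eventually_all _).mpr fun k _ ↦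
      CompactSpace.uniformContinuous_of_continuous (continuous_iterZ f k) (dist_mem_uniformity hη)
  obtain ⟨ρ, hρ, hclose⟩ := Metric.mem_uniformity_dist.mp huniform
  refine ⟨ρ, hρ, fun x y hxy hdist k hk ↦ ?_⟩
  rcases lt_or_ge k N with hkN | hkN
  · lift k to ℕ using hk
    exact (hclose hdist k (Finset.mem_range.mpr (by exact_mod_cast hkN))).le
  · exact (hN x y hxy k hkN).le

end LocalStableSets

/-! ### Leaves of hyperbolic periodic points -/

section ContractionExtension

variable {E : Type*} [NormedAddCommGroup E] [NormedSpace ℝ E] {c t : ℝ}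

lemma pow_smul_mem_ball_zero (hc : |c| ≤ 1) {v : E} (hv : v ∈ ball 0 t) (k : ℕ) :
    c ^ k • v ∈ ball (0 : E) t := by
  rw [mem_ball_zero_iff] at hv ⊢
  rw [norm_smul, norm_pow, Real.norm_eq_abs]
  exact (mul_le_of_le_one_left (norm_nonneg v) (pow_le_one₀ (abs_nonneg c) hc)).trans_lt hv

lemma exists_pow_smul_mem_ball_zero (hc : |c| < 1) (ht : 0 < t) (v : E) :
    ∃ k : ℕ, c ^ k • v ∈ ball (0 : E) t := by
  have hlim := (tendsto_pow_atTop_nhds_zero_of_abs_lt_one hc).smul_const v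
  rw [zero_smul] at hlim
  exact (hlim.eventually_mem (ball_mem_nhds 0 ht)).exists

lemma eq_zero_of_forall_norm_lt_of_smul {d : ℝ} (hd : 1 < d) {u : ℕ → E}
    (hu : ∀ j, u (j + 1) = d • u j) (hbound : ∀ j, ‖u j‖ < t) : u 0 = 0 := by
  have hpow : ∀ j, u j = d ^ j • u 0 := fun j ↦ by
    induction j with
    | zero => rw [pow_zero, one_smul]
    | succ j ih => rw [hu, ih, smul_smul, pow_succ']
  by_contra hne
  obtain ⟨j, hj⟩ := pow_unbounded_of_one_lt (t / ‖u 0‖) hd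
  rw [div_lt_iff₀ (norm_pos_iff.mpr hne)] at hj
  have hlt := hbound j
  rw [hpow, norm_smul, norm_pow, Real.norm_of_nonneg (by linarith)] at hlt
  exact hj.not_gt hlt

lemma iterate_apply_of_semiconj_smul {X : Type*} {G : X → X} {i : E → X}
    (hsemi : Function.Semiconj i (c • ·) G) (k : ℕ) (v : E) : G^[k] (i v) = i (c ^ k • v) := by
  rw [← (hsemi.iterate_right k).eq v, smul_iterate_apply]

-- `i v = G⁻ᵏ (a (c ^ k • v))` for every `k` so large that `c ^ k • v` lies in the ball.
lemma exists_semiconj_smul_extension {X : Type*} [TopologicalSpace X] (G : X ≃ₜ X)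
    (hc0 : c ≠ 0) (hc1 : |c| < 1) (ht : 0 < t) {a : E → X} (ha : ContinuousOn a (ball 0 t))
    (hinj : InjOn a (ball 0 t)) (hG : ∀ v ∈ ball 0 t, G (a v) = a (c • v)) :
    ∃ i : E → X, Continuous i ∧ Function.Injective i ∧ EqOn i a (ball 0 t) ∧
      Function.Semiconj i (c • ·) G := by
  have hiter : ∀ k, ∀ v ∈ ball (0 : E) t, G^[k] (a v) = a (c ^ k • v) := fun k v hv ↦ by
    induction k with
    | zero => rw [pow_zero, one_smul, Function.iterate_zero_apply]
    | succ k ih => rw [Function.iterate_succ_apply', ih,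
        hG _ (pow_smul_mem_ball_zero hc1.le hv k), smul_smul, pow_succ']
  have hGinj : ∀ k, Function.Injective G^[k] := fun k ↦ G.injective.iterate k
  choose K hK using exists_pow_smul_mem_ball_zero (E := E) hc1 ht
  let i : E → X := fun v ↦ G.symm^[K v] (a (c ^ K v • v))
  have hi : ∀ v k, c ^ k • v ∈ ball (0 : E) t → G^[k] (i v) = a (c ^ k • v) := fun v k hk ↦ by
    have hKv : G^[K v] (i v) = a (c ^ K v • v) := G.right_inv.iterate (K v) _
    refine hGinj (K v) ?_
    rw [← Function.iterate_add_apply, add_comm, Function.iterate_add_apply, hKv,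
      hiter k _ (hK v), hiter (K v) _ hk, smul_comm]
  refine ⟨i, continuous_iff_continuousAt.mpr fun v ↦ ?_, fun v w hvw ↦ ?_, fun v hv ↦ ?_,
    fun v ↦ ?_⟩
  · have hopen : IsOpen ((c ^ K v • ·) ⁻¹' ball (0 : E) t) :=
      isOpen_ball.preimage (continuous_const_smul _)
    have hlocal : ContinuousOn (fun v' ↦ G.symm^[K v] (a (c ^ K v • v')))
        ((c ^ K v • ·) ⁻¹' ball (0 : E) t) :=
      (G.symm.continuous.iterate _).comp_continuousOn
        (ha.comp (continuous_const_smul _).continuousOn (mapsTo_preimage _ _))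
    refine (hlocal.continuousAt (hopen.mem_nhds (hK v))).congr ?_
    filter_upwards [hopen.mem_nhds (hK v)] with v' hv'
    rw [← hi v' (K v) hv']
    exact G.left_inv.iterate (K v) _
  · have hv : c ^ (K v + K w) • v ∈ ball (0 : E) t := by
      rw [add_comm, pow_add, mul_smul]; exact pow_smul_mem_ball_zero hc1.le (hK v) _
    have hw : c ^ (K v + K w) • w ∈ ball (0 : E) t := by
      rw [pow_add, mul_smul]; exact pow_smul_mem_ball_zero hc1.le (hK w) _
    exact smul_right_injective E (pow_ne_zero _ hc0)
      (hinj hv hw (by rw [← hi v _ hv, ← hi w _ hw, hvw]))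
  · simpa using hi v 0 (by simpa using hv)
  · have hcv : c ^ K v • c • v ∈ ball (0 : E) t := by
      have hmem := pow_smul_mem_ball_zero hc1.le (hK v) 1
      rwa [pow_one, smul_comm] at hmem
    refine hGinj (K v) ?_
    rw [hi _ _ hcv, ← Function.iterate_succ_apply, Function.iterate_succ_apply', hi v _ (hK v),
      hG _ (hK v), smul_comm]

end ContractionExtension

/-- `i` is an injective parametrisation, by a normed space, of a leaf through `z = i 0` containing
the local stable set of `z`. The topology of the parameter space is the intrinsic one of the leaf
(nearby parameters give points on the same small local stable set), and no ray of the leaf stays in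
the local stable set of `z`. Unstable leaves are stable leaves of the inverse. -/
structure IsStableLeaf (g : M ≃ₜ M) (δ : ℝ) (z : M) {F : Type*} [NormedAddCommGroup F]
    [NormedSpace ℝ F] (i : F → M) : Prop where
  continuous : Continuous i
  injective : Function.Injective i
  map_zero : i 0 = z
  WsLoc_subset_range : WsLoc g δ z ⊆ range i
  eventually_mem_WsLoc : ∀ v, ∀ η > 0, ∀ᶠ v' in nhds v, i v' ∈ WsLoc g η (i v)
  exists_smul_notMem_WsLoc : ∀ v ≠ 0, ∃ c : ℝ, 1 ≤ c ∧ i (c • v) ∉ WsLoc g δ z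

section HyperbolicLeaf

variable {E E₁ E₂ : Type*} [NormedAddCommGroup E] [NormedSpace ℝ E]
  [NormedAddCommGroup E₁] [NormedSpace ℝ E₁] [NormedAddCommGroup E₂] [NormedSpace ℝ E₂]
  {g : M ≃ₜ M} {α c d t : ℝ} {l : ℕ}

lemma eventually_mem_WsLoc_of_semiconj_smul (hl : 0 < l) (hc : |c| < 1) {i : E → M}
    (hi : Continuous i) (hsemi : Function.Semiconj i (c • ·) (iterZ g l)) (v : E) {η : ℝ}
    (hη : 0 < η) : ∀ᶠ v' in nhds v, i v' ∈ WsLoc g η (i v) := by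
  have hcont : ∀ k : ℤ, Continuous fun v ↦ iterZ g k (i v) := fun k ↦ (continuous_iterZ g k).comp hi
  have hfinite : ∀ (N : ℕ) (v : E), ∀ η > 0, ∀ᶠ v' in nhds v, ∀ k ∈ Finset.range N,
      dist (iterZ g k (i v)) (iterZ g k (i v')) < η := fun N v η hη ↦
    (Finset.eventually_all _).mpr fun k _ ↦
      (continuous_const.dist (hcont k)).continuousAt.eventually_lt_const
        (by simpa only [dist_self] using hη)
  obtain ⟨s, hs, hnear0⟩ := Metric.eventually_nhds_iff_ball.mp (hfinite l 0 (η / 2) (half_pos hη))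
  obtain ⟨J, hJ⟩ := exists_pow_smul_mem_ball_zero hc hs v
  have hnear : ∀ᶠ v' in nhds v, c ^ J • v' ∈ ball (0 : E) s :=
    (continuous_const_smul (c ^ J)).continuousAt.eventually_mem (isOpen_ball.mem_nhds hJ)
  filter_upwards [hnear, hfinite (l * J) v η hη] with v' hv' hk' k hk
  lift k to ℕ using hk
  rcases lt_or_ge k (l * J) with hlt | hge
  · exact (hk' k (Finset.mem_range.mpr hlt)).le
  have hr : k % l ∈ Finset.range l := Finset.mem_range.mpr (Nat.mod_lt k hl)
  have hreduce : ∀ w, iterZ g k (i w) = iterZ g (k % l : ℕ) (i (c ^ (k / l - J) • c ^ J • w)) :=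
    fun w ↦ by
      rw [smul_smul, ← pow_add, Nat.sub_add_cancel ((Nat.le_div_iff_mul_le hl).mpr (by lia)),
        ← iterate_apply_of_semiconj_smul hsemi, ← iterZ_mul_natCast, ← iterZ_add]
      congr 1
      exact_mod_cast (Nat.mod_add_div k l).symm
  have h₁ := hnear0 _ (pow_smul_mem_ball_zero hc.le hJ (k / l - J)) _ hr
  have h₂ := hnear0 _ (pow_smul_mem_ball_zero hc.le hv' (k / l - J)) _ hr
  rw [hreduce v, hreduce v']
  linarith [dist_triangle_left (iterZ g (k % l : ℕ) (i (c ^ (k / l - J) • c ^ J • v)))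
    (iterZ g (k % l : ℕ) (i (c ^ (k / l - J) • c ^ J • v'))) (iterZ g (k % l : ℕ) (i 0))]

variable [CompactSpace M]

lemma exists_smul_notMem_WsLoc_of_semiconj_smul (hexp : IsExpansive g α) (hl : 0 < l) (hc0 : 0 < c)
    (hc1 : c < 1) {i : E → M} (hinj : Function.Injective i)
    (hsemi : Function.Semiconj i (c • ·) (iterZ g l)) {v : E} (hv : v ≠ 0) :
    ∃ b : ℝ, 1 ≤ b ∧ i (b • v) ∉ WsLoc g α (i 0) := by
  by_contra! hmem
  obtain ⟨N, hN⟩ := hexp.exists_dist_iterZ_lt_of_mem_WsLoc (dist_pos.mpr (hinj.ne hv.symm))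
  have hlt := hN _ _ (hmem (c⁻¹ ^ N) (one_le_pow₀ (one_le_inv_iff₀.mpr ⟨hc0, hc1.le⟩))) (l * N)
    (by exact_mod_cast Nat.le_mul_of_pos_left N hl)
  rw [iterZ_mul_natCast, iterZ_mul_natCast, iterate_apply_of_semiconj_smul hsemi,
    iterate_apply_of_semiconj_smul hsemi, smul_zero, smul_smul, ← mul_pow,
    mul_inv_cancel₀ hc0.ne', one_pow, one_smul] at hlt
  exact lt_irrefl _ hlt

-- A point whose forward orbit stays in the chart has no component in the expanding direction.
lemma WsLoc_subset_range_of_hyperbolic_chart (hexp : IsExpansive g α) (hl : 0 < l) {z : M}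
    (hz : iterZ g l z = z) {e : OpenPartialHomeomorph M (E₁ × E₂)} (hze : z ∈ e.source)
    (hez : e z = 0) (hc : c ≠ 0) (hd : 1 < d)
    (hconj : ∀ x ∈ e.source, iterZ g l x ∈ e.source → e (iterZ g l x) = (c • (e x).1, d • (e x).2))
    (ht : 0 < t) {i : E₁ → M} (hsemi : Function.Semiconj i (c • ·) (iterZ g l))
    (hi : ∀ v ∈ ball 0 t, i v = e.symm (v, 0)) : WsLoc g α z ⊆ range i := by
  intro w hw
  have hnhds : e.source ∩ e ⁻¹' ball 0 t ∈ nhds z :=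
    (e.continuousOn.isOpen_inter_preimage e.open_source isOpen_ball).mem_nhds
      ⟨hze, by simpa only [mem_preimage, hez] using mem_ball_self ht⟩
  obtain ⟨η, hη, hsub⟩ := Metric.mem_nhds_iff.mp hnhds
  obtain ⟨N, hN⟩ := hexp.exists_dist_iterZ_lt_of_mem_WsLoc hη
  let x := (iterZ g l)^[N] w
  have hx : ∀ j, (iterZ g l)^[j] x ∈ e.source ∩ e ⁻¹' ball 0 t := fun j ↦ by
    refine hsub (mem_ball'.mpr ?_)
    have hdist := hN z w hw (l * (j + N : ℕ)) (by
      exact_mod_cast (Nat.le_add_left N j).trans (Nat.le_mul_of_pos_left _ hl))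
    rwa [iterZ_mul_natCast, iterZ_mul_natCast, Function.iterate_fixed hz,
      Function.iterate_add_apply] at hdist
  have hx2 : (e x).2 = 0 := eq_zero_of_forall_norm_lt_of_smul hd
    (u := fun j ↦ (e ((iterZ g l)^[j] x)).2)
    (fun j ↦ by
      have hmem := (hx (j + 1)).1
      rw [Function.iterate_succ_apply'] at hmem ⊢
      rw [hconj _ (hx j).1 hmem])
    fun j ↦ (norm_snd_le _).trans_lt (mem_ball_zero_iff.mp (hx j).2)
  have hx1 : (e x).1 ∈ ball (0 : E₁) t :=
    mem_ball_zero_iff.mpr ((norm_fst_le _).trans_lt (mem_ball_zero_iff.mp (hx 0).2))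
  have hxi : i (e x).1 = x := by
    rw [hi _ hx1, ← hx2]
    exact e.left_inv (hx 0).1
  refine ⟨c⁻¹ ^ N • (e x).1, (injective_iterZ g l).iterate N ?_⟩
  rw [iterate_apply_of_semiconj_smul hsemi, smul_smul, ← mul_pow, mul_inv_cancel₀ hc, one_pow,
    one_smul, hxi]

lemma exists_isStableLeaf_of_hyperbolic_chart (hexp : IsExpansive g α) (hl : 0 < l) {z : M}
    (hz : iterZ g l z = z) {e : OpenPartialHomeomorph M (E₁ × E₂)} (hze : z ∈ e.source)
    (hez : e z = 0) (hc0 : 0 < c) (hc1 : c < 1) (hd : 1 < d)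
    (hconj : ∀ x ∈ e.source, iterZ g l x ∈ e.source →
      e (iterZ g l x) = (c • (e x).1, d • (e x).2)) :
    ∃ i : E₁ → M, IsStableLeaf g α z i := by
  have hsymm0 : e.symm 0 = z := hez ▸ e.left_inv hze
  have h0 : (0 : E₁ × E₂) ∈ e.target := hez ▸ e.map_source hze
  have hreturn : ∀ᶠ q in nhds (0 : E₁ × E₂), iterZ g l (e.symm q) ∈ e.source :=
    ((continuous_iterZ g l).continuousAt.comp (e.continuousAt_symm h0)).eventually_mem
      (e.open_source.mem_nhds (by rwa [Function.comp_apply, hsymm0, hz]))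
  obtain ⟨t, ht, hball⟩ := Metric.eventually_nhds_iff_ball.mp
    ((e.open_target.eventually_mem h0).and hreturn)
  have hball₁ : ∀ v ∈ ball (0 : E₁) t, (v, (0 : E₂)) ∈ e.target ∧
      iterZ g l (e.symm (v, 0)) ∈ e.source := fun v hv ↦ hball _ (by simpa using hv)
  have hcabs : |c| < 1 := by rwa [abs_of_pos hc0]
  obtain ⟨i, hi, hinj, hia, hsemi⟩ := exists_semiconj_smul_extension (g ^ (l : ℤ))
    (a := fun v : E₁ ↦ e.symm (v, 0)) hc0.ne' hcabs ht
    (e.continuousOn_symm.comp (by fun_prop) fun v hv ↦ (hball₁ v hv).1)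
    (fun v hv w hw hvw ↦
      congrArg Prod.fst (e.symm.injOn (hball₁ v hv).1 (hball₁ w hw).1 hvw))
    (fun v hv ↦ by
      obtain ⟨htarget, hsource⟩ := hball₁ v hv
      have himage := hconj _ (e.map_target htarget) hsource
      rw [e.right_inv htarget, smul_zero] at himage
      rw [← iterZ_eq_zpow, ← himage, e.left_inv hsource])
  rw [← iterZ_eq_zpow] at hsemi
  have hi0 : i 0 = z := (hia (mem_ball_self ht)).trans hsymm0
  exact ⟨i, hi, hinj, hi0,
    WsLoc_subset_range_of_hyperbolic_chart hexp hl hz hze hez hc0.ne' hd hconj ht hsemi hia,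
    fun v η hη ↦ eventually_mem_WsLoc_of_semiconj_smul hl hcabs hi hsemi v hη,
    fun v hv ↦ hi0 ▸ exists_smul_notMem_WsLoc_of_semiconj_smul hexp hl hc0 hc1 hinj hsemi hv⟩

end HyperbolicLeaf

lemma exists_openPartialHomeomorph_of_homeomorph {X Y : Type*} [TopologicalSpace X]
    [TopologicalSpace Y] {U : Set X} {V : Set Y} (hU : IsOpen U) (hV : IsOpen V) (h : U ≃ₜ V)
    (hne : U.Nonempty) :
    ∃ e : OpenPartialHomeomorph X Y, e.source = U ∧ ∀ z (hz : z ∈ U), e z = h ⟨z, hz⟩ := by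
  have : Nonempty U := hne.to_subtype
  have : Nonempty V := h.nonempty_congr.mp this
  let ιU := hU.isOpenEmbedding_subtypeVal.toOpenPartialHomeomorph (Subtype.val : U → X)
  let ιV := hV.isOpenEmbedding_subtypeVal.toOpenPartialHomeomorph (Subtype.val : V → Y)
  refine ⟨ιU.symm.trans (h.toOpenPartialHomeomorph.trans ιV), ?_, fun z hz ↦ ?_⟩
  · simp [ιU, ιV]
  · have hleft : ιU.symm z = ⟨z, hz⟩ :=
      hU.isOpenEmbedding_subtypeVal.toOpenPartialHomeomorph_left_inv (x := (⟨z, hz⟩ : U))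
    simp [hleft, ιV]

lemma exists_hyperbolic_chart_of_mem_PerHr {f : M ≃ₜ M} {n r : ℕ} {z : M} (hz : z ∈ PerHr f n r) :
    ∃ (l : ℕ) (e : OpenPartialHomeomorph M (ModelSp n r)), 0 < l ∧ iterZ f l z = z ∧
      z ∈ e.source ∧ e z = 0 ∧ ∀ x ∈ e.source, iterZ f l x ∈ e.source →
        e (iterZ f l x) = ((1 / 2 : ℝ) • (e x).1, (2 : ℝ) • (e x).2) := by
  obtain ⟨l, hl, hlz, U, V, h, hU, hV, -, hzU, hz0, hconj⟩ := hz
  obtain ⟨e, hsource, he⟩ := exists_openPartialHomeomorph_of_homeomorph hU hV h ⟨z, hzU⟩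
  refine ⟨l, e, hl, by rw [iterZ_natCast, hlz], hsource ▸ hzU, by rw [he z hzU, hz0],
    fun x hx hx' ↦ ?_⟩
  rw [hsource] at hx hx'
  simp only [iterZ_natCast] at hx' ⊢
  rw [he _ hx, he _ hx', hconj x hx hx']
  refine Prod.ext (funext fun j ↦ ?_) rfl
  change _ / 2 = (1 / 2 : ℝ) * _
  rw [one_div_mul_eq_div]

section PeriodicLeaves

variable [CompactSpace M] {f : M ≃ₜ M} {α : ℝ} {n r : ℕ} {z : M}

lemma IsExpansive.exists_isStableLeaf (hexp : IsExpansive f α) (hz : z ∈ PerHr f n r) :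
    ∃ i : (Fin r → ℝ) → M, IsStableLeaf f α z i := by
  obtain ⟨l, e, hl, hlz, hze, hez, hconj⟩ := exists_hyperbolic_chart_of_mem_PerHr hz
  exact exists_isStableLeaf_of_hyperbolic_chart hexp hl hlz hze hez (by norm_num) (by norm_num)
    one_lt_two hconj

lemma IsExpansive.exists_isStableLeaf_symm (hexp : IsExpansive f α) (hz : z ∈ PerHr f n r) :
    ∃ i : (Fin (n - r) → ℝ) → M, IsStableLeaf f.symm α z i := by
  obtain ⟨l, e, hl, hlz, hze, hez, hconj⟩ := exists_hyperbolic_chart_of_mem_PerHr hz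
  let e' := e.trans (Homeomorph.prodComm (Fin r → ℝ) (Fin (n - r) → ℝ)).toOpenPartialHomeomorph
  have hsource : e'.source = e.source := by simp [e']
  have he' : ∀ x, e' x = (e x).swap := fun x ↦ by simp [e']
  have hfix : iterZ f.symm l z = z := by
    rw [iterZ_symm]
    exact (congrArg (iterZ f (-l)) hlz).symm.trans (iterZ_neg_iterZ f l z)
  refine exists_isStableLeaf_of_hyperbolic_chart hexp.symm hl hfix (e := e')
    (hsource ▸ hze) (by rw [he', hez]; rfl) (c := 1 / 2) (by norm_num) (by norm_num)
    one_lt_two fun x hx hx' ↦ ?_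
  rw [hsource] at hx hx'
  have hback : iterZ f l (iterZ f.symm l x) = x := by rw [iterZ_symm, iterZ_iterZ_neg]
  have hforward := hconj _ hx' (hback.symm ▸ hx)
  rw [hback] at hforward
  simp only [he', hforward, Prod.swap_prod_mk, smul_smul]
  norm_num
  rfl

end PeriodicLeaves

/-! ### Product boxes -/

section Dimension

variable {E F : Type*} [NormedAddCommGroup E] [NormedSpace ℝ E]

lemma exists_isOpenEmbedding_range_subset {c : E} {O : Set E} (hO : O ∈ nhds c) :
    ∃ σ : E → E, Topology.IsOpenEmbedding σ ∧ σ 0 = c ∧ range σ ⊆ O := by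
  obtain ⟨r, hr, hball⟩ := Metric.mem_nhds_iff.mp hO
  refine ⟨OpenPartialHomeomorph.univBall c r, OpenPartialHomeomorph.isOpenEmbedding _
    (OpenPartialHomeomorph.univBall_source c r), OpenPartialHomeomorph.univBall_apply_zero c r, ?_⟩
  rwa [← image_univ, ← OpenPartialHomeomorph.univBall_source c r,
    OpenPartialHomeomorph.image_source_eq_target, OpenPartialHomeomorph.univBall_target c hr]

variable [FiniteDimensional ℝ E] [NormedAddCommGroup F] [NormedSpace ℝ F] [FiniteDimensional ℝ F]

lemma finrank_le_of_continuousOn_injOn {U : Set F} (hU : IsOpen U) (hne : U.Nonempty) {θ : F → E}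
    (hθ : ContinuousOn θ U) (hinj : InjOn θ U) : Module.finrank ℝ F ≤ Module.finrank ℝ E := by
  by_contra! hlt
  obtain ⟨j, hj⟩ := finrank_le_iff_exists_linearMap.mp hlt.le
  have hopen : IsOpen ((j ∘ θ) '' U) :=
    isOpen_image_of_injOn_of_finrank_eq rfl hU
      (j.continuous_of_finiteDimensional.comp_continuousOn hθ) (hj.comp_injOn hinj)
  have hrange : LinearMap.range j = ⊤ := Submodule.eq_top_of_nonempty_interior' _ <|
    (hne.image (j ∘ θ)).mono <| interior_maximal (image_subset_iff.mpr fun v _ ↦ ⟨θ v, rfl⟩) hopen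
  exact hlt.not_ge (j.finrank_le_finrank_of_surjective (LinearMap.range_eq_top.mp hrange))

end Dimension

/-- `φ` parametrises a neighbourhood of `x` by a product in such a way that `S` is equality of the
first coordinates and `U` is equality of the second coordinates: the slices `{a} × E₂` are plaques
of `S` and the slices `E₁ × {b}` are plaques of `U`. -/
structure IsBox {E₁ E₂ : Type*} [NormedAddCommGroup E₁] [NormedAddCommGroup E₂]
    (S U : M → M → Prop) (x : M) (φ : E₁ × E₂ → M) : Prop where
  isOpenEmbedding : Topology.IsOpenEmbedding φ
  map_zero : φ 0 = x
  fst_iff : ∀ a b, S (φ a) (φ b) ↔ a.1 = b.1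
  snd_iff : ∀ a b, U (φ a) (φ b) ↔ a.2 = b.2

namespace IsBox

variable {E₁ E₂ : Type*} [NormedAddCommGroup E₁] [NormedAddCommGroup E₂] {S U : M → M → Prop}
  {x : M} {φ : E₁ × E₂ → M}

lemma injective (h : IsBox S U x φ) : Function.Injective φ := h.isOpenEmbedding.injective

lemma continuous (h : IsBox S U x φ) : Continuous φ := h.isOpenEmbedding.continuous

lemma range_mem_nhds (h : IsBox S U x φ) : range φ ∈ nhds x :=
  h.isOpenEmbedding.isOpen_range.mem_nhds (h.map_zero ▸ mem_range_self 0)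

lemma swap (h : IsBox S U x φ) : IsBox U S x (φ ∘ Prod.swap) where
  isOpenEmbedding := h.isOpenEmbedding.comp (Homeomorph.prodComm E₂ E₁).isOpenEmbedding
  map_zero := h.map_zero
  fst_iff a b := h.snd_iff a.swap b.swap
  snd_iff a b := h.fst_iff a.swap b.swap

lemma comp_prodMap {F₁ F₂ : Type*} [NormedAddCommGroup F₁] [NormedAddCommGroup F₂]
    (h : IsBox S U x φ) {σ₁ : F₁ → E₁} {σ₂ : F₂ → E₂} (h₁ : Topology.IsOpenEmbedding σ₁)
    (h₂ : Topology.IsOpenEmbedding σ₂) :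
    IsBox S U (φ (σ₁ 0, σ₂ 0)) (φ ∘ Prod.map σ₁ σ₂) where
  isOpenEmbedding := h.isOpenEmbedding.comp (h₁.prodMap h₂)
  map_zero := rfl
  fst_iff _ _ := (h.fst_iff _ _).trans h₁.injective.eq_iff
  snd_iff _ _ := (h.snd_iff _ _).trans h₂.injective.eq_iff

lemma recentre (h : IsBox S U x φ) (c : E₁ × E₂) : IsBox S U (φ c) fun a ↦ φ (a + c) := by
  simpa [Function.comp_def, Prod.map, Prod.add_def] using
    h.comp_prodMap (Homeomorph.addRight c.1).isOpenEmbedding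
      (Homeomorph.addRight c.2).isOpenEmbedding

variable [NormedSpace ℝ E₁] [NormedSpace ℝ E₂]

lemma exists_range_subset (h : IsBox S U x φ) {O : Set M} (hO : O ∈ nhds x) :
    ∃ ψ : E₁ × E₂ → M, IsBox S U x ψ ∧ range ψ ⊆ O := by
  rw [← h.map_zero] at hO
  obtain ⟨O₁, hO₁, O₂, hO₂, hsub⟩ :=
    mem_nhds_prod_iff.mp (h.continuous.continuousAt.preimage_mem_nhds hO)
  obtain ⟨σ₁, h₁, hzero₁, hrange₁⟩ := exists_isOpenEmbedding_range_subset hO₁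
  obtain ⟨σ₂, h₂, hzero₂, hrange₂⟩ := exists_isOpenEmbedding_range_subset hO₂
  refine ⟨φ ∘ Prod.map σ₁ σ₂, ?_, range_subset_iff.mpr fun a ↦
    hsub ⟨hrange₁ (mem_range_self a.1), hrange₂ (mem_range_self a.2)⟩⟩
  simpa only [hzero₁, hzero₂, Prod.fst_zero, Prod.snd_zero, Prod.mk_zero_zero, h.map_zero]
    using h.comp_prodMap h₁ h₂

lemma exists_of_finrank_eq [FiniteDimensional ℝ E₁] [FiniteDimensional ℝ E₂] {F₁ F₂ : Type*}
    [NormedAddCommGroup F₁] [NormedSpace ℝ F₁] [FiniteDimensional ℝ F₁]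
    [NormedAddCommGroup F₂] [NormedSpace ℝ F₂] [FiniteDimensional ℝ F₂]
    (h : IsBox S U x φ) (h₁ : Module.finrank ℝ F₁ = Module.finrank ℝ E₁)
    (h₂ : Module.finrank ℝ F₂ = Module.finrank ℝ E₂) : ∃ ψ : F₁ × F₂ → M, IsBox S U x ψ := by
  have hbox := h.comp_prodMap (ContinuousLinearEquiv.ofFinrankEq h₁).toHomeomorph.isOpenEmbedding
    (ContinuousLinearEquiv.ofFinrankEq h₂).toHomeomorph.isOpenEmbedding
  have hzero : φ (ContinuousLinearEquiv.ofFinrankEq h₁ 0, ContinuousLinearEquiv.ofFinrankEq h₂ 0)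
      = x := by simpa using! h.map_zero
  exact ⟨_, hzero ▸ hbox⟩

end IsBox

section PlaquesOfLeaves

variable {E₁ E₂ F : Type*} [NormedAddCommGroup E₁] [NormedAddCommGroup E₂]
  [NormedAddCommGroup F] [NormedSpace ℝ F] {g : M ≃ₜ M} {δ ε : ℝ} {z : M}
  {φ : E₁ × E₂ → M} {i : F → M}

lemma IsStableLeaf.exists_local_slice (hi : IsStableLeaf g δ z i)
    (hφ : Topology.IsOpenEmbedding φ) (hfst : ∀ a b, φ b ∈ WsLoc g ε (φ a) → a.1 = b.1)
    (hε : 0 < ε) {v : F} {a : E₁ × E₂} (hv : i v = φ a) {N : Set F} (hN : N ∈ nhds v) :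
    ∃ O ⊆ N, IsOpen O ∧ v ∈ O ∧ ∃ θ : F → E₂, ContinuousOn θ O ∧ InjOn θ O ∧ θ v = a.2 ∧
      ∀ v' ∈ O, i v' = φ (a.1, θ v') := by
  have hrange : ∀ᶠ v' in nhds v, i v' ∈ range φ :=
    hi.continuous.continuousAt.eventually_mem (hφ.isOpen_range.mem_nhds ⟨a, hv.symm⟩)
  obtain ⟨O, hO, hOopen, hvO⟩ :=
    _root_.eventually_nhds_iff.mp ((hi.eventually_mem_WsLoc v ε hε).and (hrange.and hN))
  let e := hφ.toOpenPartialHomeomorph φ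
  have he : ∀ a, e.symm (φ a) = a := fun a ↦ hφ.toOpenPartialHomeomorph_left_inv φ
  have hslice : ∀ v' ∈ O, i v' = φ (a.1, (e.symm (i v')).2) := fun v' hv' ↦ by
    obtain ⟨hS, ⟨b, hb⟩, -⟩ := hO v' hv'
    rw [hv, ← hb] at hS
    rw [← hb, he, hfst _ _ hS]
  refine ⟨O, fun v' hv' ↦ (hO v' hv').2.2, hOopen, hvO, fun v' ↦ (e.symm (i v')).2,
    continuous_snd.comp_continuousOn ?_, fun v₁ hv₁ v₂ hv₂ h ↦ hi.injective ?_,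
    by simp only [hv, he], hslice⟩
  · exact e.continuousOn_symm.comp hi.continuous.continuousOn fun v' hv' ↦ by
      simpa [e] using (hO v' hv').2.1
  · rw [hslice v₁ hv₁, hslice v₂ hv₂, show (e.symm (i v₁)).2 = _ from h]

variable [NormedSpace ℝ E₂] [FiniteDimensional ℝ E₂] [FiniteDimensional ℝ F]

lemma IsStableLeaf.finrank_le (hi : IsStableLeaf g δ z i) (hφ : Topology.IsOpenEmbedding φ)
    (hfst : ∀ a b, φ b ∈ WsLoc g ε (φ a) → a.1 = b.1) (hε : 0 < ε) (hz : z ∈ range φ) :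
    Module.finrank ℝ F ≤ Module.finrank ℝ E₂ := by
  obtain ⟨a, ha⟩ := hz
  obtain ⟨O, -, hO, h0, θ, hθ, hinj, -⟩ :=
    hi.exists_local_slice hφ hfst hε (hi.map_zero.trans ha.symm) Filter.univ_mem
  exact finrank_le_of_continuousOn_injOn hO ⟨0, h0⟩ hθ hinj

lemma IsStableLeaf.slice_subset_WsLoc {t : E₁} {y y' : E₂} (hi : IsStableLeaf g δ (φ (t, y)) i)
    (hF : Module.finrank ℝ F = Module.finrank ℝ E₂) (hδ : 0 < δ) (hφ : Topology.IsOpenEmbedding φ)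
    (hfst : ∀ a b, φ b ∈ WsLoc g δ (φ a) → a.1 = b.1)
    (hhalf : ∀ a b, φ b ∈ WsLoc g δ (φ a) → φ b ∈ WsLoc g (δ / 2) (φ a)) :
    φ (t, y') ∈ WsLoc g δ (φ (t, y)) := by
  let A : Set E₂ := {y' | φ (t, y') ∈ WsLoc g δ (φ (t, y))}
  have hclosed : IsClosed A :=
    (isClosed_setOf_mem_WsLoc g δ).preimage
      (continuous_const.prodMk (hφ.continuous.comp (Continuous.prodMk_right t)))
  have hopen : IsOpen A := isOpen_iff_mem_nhds.mpr fun y' hy' ↦ by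
    obtain ⟨v, hv⟩ := hi.WsLoc_subset_range hy'
    obtain ⟨O, hON, hO, hvO, θ, hθ, hinj, hθv, hslice⟩ :=
      hi.exists_local_slice hφ hfst hδ hv (hi.eventually_mem_WsLoc v (δ / 2) (half_pos hδ))
    refine Filter.mem_of_superset
      ((isOpen_image_of_injOn_of_finrank_eq hF hO hθ hinj).mem_nhds ⟨v, hvO, hθv⟩) ?_
    rintro _ ⟨v', hv', rfl⟩
    have hnear := hON hv'
    rw [mem_ofPred_eq, hv, hslice v' hv'] at hnear
    exact WsLoc_trans_half (hhalf _ _ hy') hnear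
  have hA : A = univ := IsClopen.eq_univ ⟨hclosed, hopen⟩ ⟨y, self_mem_WsLoc g hδ.le _⟩
  exact hA.ge (mem_univ y')

lemma mem_WsLoc_of_fst_eq_of_dense_leaves (hF : Module.finrank ℝ F = Module.finrank ℝ E₂)
    (hδ : 0 < δ) (hφ : Topology.IsOpenEmbedding φ)
    (hfst : ∀ a b, φ b ∈ WsLoc g δ (φ a) → a.1 = b.1)
    (hhalf : ∀ a b, φ b ∈ WsLoc g δ (φ a) → φ b ∈ WsLoc g (δ / 2) (φ a)) {D : Set M}
    (hD : Dense D) (hleaf : ∀ z ∈ D, ∃ i : F → M, IsStableLeaf g δ z i) {a b : E₁ × E₂}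
    (hab : a.1 = b.1) : φ b ∈ WsLoc g δ (φ a) := by
  have hclosed : IsClosed {a : E₁ × E₂ | φ (a.1, b.2) ∈ WsLoc g δ (φ a)} :=
    (isClosed_setOf_mem_WsLoc g δ).preimage
      (hφ.continuous.prodMk (hφ.continuous.comp (by fun_prop)))
  have hdense : Dense {a : E₁ × E₂ | φ (a.1, b.2) ∈ WsLoc g δ (φ a)} :=
    (hD.preimage hφ.isOpenMap).mono fun a ha ↦ by
      obtain ⟨i, hi⟩ := hleaf (φ a) ha
      exact hi.slice_subset_WsLoc hF hδ hφ hfst hhalf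
  have hmem : φ (a.1, b.2) ∈ WsLoc g δ (φ a) := hclosed.closure_eq.subset (hdense a)
  rwa [hab] at hmem

end PlaquesOfLeaves

section LocalProductStructure

variable {f : M ≃ₜ M} {n : ℕ} {x : M}

lemma IsBox.admitsLPS {k : ℕ} {ε : ℝ} {φ : (Fin k → ℝ) × (Fin (n - k) → ℝ) → M} (hε : 0 < ε)
    (h : IsBox (fun x y ↦ y ∈ WsLoc f ε x) (fun x y ↦ y ∈ WsLoc f.symm ε x) x φ) :
    AdmitsLPS f n x := by
  refine ⟨k, φ, ε, hε, h.isOpenEmbedding.isEmbedding, ⟨0, h.map_zero⟩, fun a b ↦ ⟨?_, ?_⟩⟩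
  · ext y
    simp only [prod_univ, mem_image, mem_preimage, mem_singleton_iff, mem_inter_iff, mem_range]
    constructor
    · rintro ⟨c, hc, rfl⟩
      exact ⟨(h.fst_iff _ _).mpr hc.symm, c, rfl⟩
    · rintro ⟨hS, c, rfl⟩
      exact ⟨c, ((h.fst_iff _ _).mp hS).symm, rfl⟩
  · ext y
    simp only [univ_prod, mem_image, mem_preimage, mem_singleton_iff, mem_inter_iff, mem_range,
      WuLoc_eq_WsLoc_symm]
    constructor
    · rintro ⟨c, hc, rfl⟩
      exact ⟨(h.snd_iff _ _).mpr hc.symm, c, rfl⟩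
    · rintro ⟨hU, c, rfl⟩
      exact ⟨c, ((h.snd_iff _ _).mp hU).symm, rfl⟩

variable [ChartedSpace (EuclideanSpace ℝ (Fin n)) M]

lemma finrank_le_of_continuous_injective {E : Type*} [NormedAddCommGroup E] [NormedSpace ℝ E]
    [FiniteDimensional ℝ E] {φ : E → M} (hφ : Continuous φ) (hinj : Function.Injective φ) :
    Module.finrank ℝ E ≤ n := by
  let c := chartAt (EuclideanSpace ℝ (Fin n)) (φ 0)
  simpa using finrank_le_of_continuousOn_injOn (c.open_source.preimage hφ)
    ⟨0, mem_chart_source _ (φ 0)⟩ (c.continuousOn.comp hφ.continuousOn fun _ ha ↦ ha)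
    (c.injOn.comp hinj.injOn fun _ ha ↦ ha)

lemma isOpenEmbedding_of_continuous_injective {E : Type*} [NormedAddCommGroup E]
    [NormedSpace ℝ E] [FiniteDimensional ℝ E] {φ : E → M} (hE : Module.finrank ℝ E = n)
    (hφ : Continuous φ) (hinj : Function.Injective φ) : Topology.IsOpenEmbedding φ :=
  .of_continuous_injective_isOpenMap hφ hinj fun _ hU ↦
    isOpen_image_of_injOn_of_chartedSpace (H := EuclideanSpace ℝ (Fin n)) (by simpa using hE) hU
      hφ.continuousOn hinj.injOn

lemma AdmitsLPS.exists_isBox (hx : AdmitsLPS f n x) :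
    ∃ k ≤ n, ∃ ε > 0, ∃ φ : (Fin k → ℝ) × (Fin (n - k) → ℝ) → M,
      IsBox (fun x y ↦ y ∈ WsLoc f ε x) (fun x y ↦ y ∈ WsLoc f.symm ε x) x φ := by
  obtain ⟨k, h, ε, hε, hemb, ⟨c, rfl⟩, hslice⟩ := hx
  have hle := finrank_le_of_continuous_injective (n := n) hemb.continuous hemb.injective
  simp only [Module.finrank_prod, Module.finrank_fin_fun] at hle
  have hmem : ∀ a b, ((∃ c, c.1 = a.1 ∧ h c = h b) ↔ h b ∈ WsLoc f ε (h a)) ∧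
      ((∃ c, c.2 = a.2 ∧ h c = h b) ↔ h b ∈ WsLoc f.symm ε (h a)) := fun a b ↦ by
    have hb := hslice a.1 a.2
    simp only [prod_univ, univ_prod, WuLoc_eq_WsLoc_symm, Set.ext_iff, mem_image, mem_preimage,
      mem_singleton_iff, mem_inter_iff] at hb
    exact ⟨by simpa using hb.1 (h b), by simpa using hb.2 (h b)⟩
  have hopen : Topology.IsOpenEmbedding h :=
    isOpenEmbedding_of_continuous_injective (n := n) (by simp; lia) hemb.continuous hemb.injective
  refine ⟨k, by lia, ε, hε, fun a ↦ h (a + c),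
    IsBox.recentre ⟨hopen, rfl, fun a b ↦ ?_, fun a b ↦ ?_⟩ c⟩
  · simp [← (hmem a b).1, hemb.injective.eq_iff, eq_comm]
  · simp [← (hmem a b).2, hemb.injective.eq_iff, eq_comm]

end LocalProductStructure

section UniformBoxes

variable [CompactSpace M] {f : M ≃ₜ M} {α ε : ℝ} {x : M} {E₁ E₂ F₁ F₂ : Type*}
  [NormedAddCommGroup E₁] [NormedSpace ℝ E₁] [FiniteDimensional ℝ E₁]
  [NormedAddCommGroup E₂] [NormedSpace ℝ E₂] [FiniteDimensional ℝ E₂]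
  [NormedAddCommGroup F₁] [NormedSpace ℝ F₁] [FiniteDimensional ℝ F₁]
  [NormedAddCommGroup F₂] [NormedSpace ℝ F₂] [FiniteDimensional ℝ F₂]

-- In a small enough box, `α`-related points are both `ε`-related and `α / 2`-related.
lemma IsExpansive.exists_isBox_of_dense_leaves (hexp : IsExpansive f α) (hα : 0 < α) (hε : 0 < ε)
    {φ : E₁ × E₂ → M}
    (h : IsBox (fun x y ↦ y ∈ WsLoc f ε x) (fun x y ↦ y ∈ WsLoc f.symm ε x) x φ)
    (h₁ : Module.finrank ℝ F₁ = Module.finrank ℝ E₁)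
    (h₂ : Module.finrank ℝ F₂ = Module.finrank ℝ E₂) {D : Set M} (hD : Dense D)
    (hleaf₁ : ∀ z ∈ D, ∃ i : F₁ → M, IsStableLeaf f.symm α z i)
    (hleaf₂ : ∀ z ∈ D, ∃ i : F₂ → M, IsStableLeaf f α z i) :
    ∃ ψ : E₁ × E₂ → M,
      IsBox (fun x y ↦ y ∈ WsLoc f α x) (fun x y ↦ y ∈ WsLoc f.symm α x) x ψ := by
  have hη : 0 < min ε (α / 2) := lt_min hε (half_pos hα)
  obtain ⟨ρ₂, hρ₂, hS⟩ := hexp.exists_mem_WsLoc_of_dist_lt hη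
  obtain ⟨ρ₁, hρ₁, hU⟩ := hexp.symm.exists_mem_WsLoc_of_dist_lt hη
  obtain ⟨ψ, hψ, hrange⟩ := h.exists_range_subset
    (ball_mem_nhds x (half_pos (lt_min hρ₁ hρ₂)))
  have hdist : ∀ a b, dist (ψ a) (ψ b) < min ρ₁ ρ₂ := fun a b ↦ by
    linarith [dist_triangle_right (ψ a) (ψ b) x, mem_ball.mp (hrange (mem_range_self a)),
      mem_ball.mp (hrange (mem_range_self b))]
  have hsmall₂ : ∀ a b, ψ b ∈ WsLoc f α (ψ a) → ψ b ∈ WsLoc f (min ε (α / 2)) (ψ a) := fun a b hab ↦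
    hS _ _ hab ((hdist a b).trans_le (min_le_right _ _))
  have hsmall₁ : ∀ a b, ψ b ∈ WsLoc f.symm α (ψ a) → ψ b ∈ WsLoc f.symm (min ε (α / 2)) (ψ a) :=
    fun a b hab ↦ hU _ _ hab ((hdist a b).trans_le (min_le_left _ _))
  have hfst : ∀ a b, ψ b ∈ WsLoc f α (ψ a) → a.1 = b.1 := fun a b hab ↦
    (hψ.fst_iff a b).mp (WsLoc_mono (min_le_left _ _) (hsmall₂ a b hab))
  have hsnd : ∀ a b, ψ b ∈ WsLoc f.symm α (ψ a) → a.2 = b.2 := fun a b hab ↦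
    (hψ.snd_iff a b).mp (WsLoc_mono (min_le_left _ _) (hsmall₁ a b hab))
  refine ⟨ψ, hψ.isOpenEmbedding, hψ.map_zero, fun a b ↦ ⟨hfst a b, fun hab ↦ ?_⟩,
    fun a b ↦ ⟨hsnd a b, fun hab ↦ ?_⟩⟩
  · exact mem_WsLoc_of_fst_eq_of_dense_leaves h₂ hα hψ.isOpenEmbedding hfst
      (fun a b hab ↦ WsLoc_mono (min_le_right _ _) (hsmall₂ a b hab)) hD hleaf₂ hab
  · exact mem_WsLoc_of_fst_eq_of_dense_leaves (a := a.swap) (b := b.swap) h₁ hα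
      hψ.swap.isOpenEmbedding (fun a b hab ↦ hsnd _ _ hab)
      (fun a b hab ↦ WsLoc_mono (min_le_right _ _) (hsmall₁ _ _ hab)) hD hleaf₁ hab

theorem IsExpansive.exists_isBox_of_admitsLPS {n r : ℕ} [ChartedSpace (EuclideanSpace ℝ (Fin n)) M]
    (hexp : IsExpansive f α) (hα : 0 < α) (hD : Dense (PerHr f n r)) (hx : AdmitsLPS f n x)
    (h₁ : Module.finrank ℝ E₁ = n - r) (h₂ : Module.finrank ℝ E₂ = r) :
    ∃ φ : E₁ × E₂ → M,
      IsBox (fun x y ↦ y ∈ WsLoc f α x) (fun x y ↦ y ∈ WsLoc f.symm α x) x φ := by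
  obtain ⟨k, hkn, ε, hε, φ, hφ⟩ := hx.exists_isBox
  obtain ⟨z, hzD, hzφ⟩ :=
    hD.exists_mem_open hφ.isOpenEmbedding.isOpen_range ⟨x, mem_of_mem_nhds hφ.range_mem_nhds⟩
  obtain ⟨i, hi⟩ := hexp.exists_isStableLeaf hzD
  obtain ⟨j, hj⟩ := hexp.exists_isStableLeaf_symm hzD
  have hr := hi.finrank_le hφ.isOpenEmbedding (fun a b ↦ (hφ.fst_iff a b).mp) hε hzφ
  have hnr := hj.finrank_le hφ.swap.isOpenEmbedding (fun a b ↦ (hφ.swap.fst_iff a b).mp) hε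
    (by rwa [Prod.swap_surjective.range_comp])
  simp only [Module.finrank_fin_fun] at hr hnr
  obtain ⟨ψ, hψ⟩ := hφ.exists_of_finrank_eq (F₁ := E₁) (F₂ := E₂) (by simp; lia) (by simp; lia)
  exact hexp.exists_isBox_of_dense_leaves hα hε hψ (by simp [h₁]) (by simp [h₂]) hD
    (fun z hz ↦ hexp.exists_isStableLeaf_symm hz) fun z hz ↦ hexp.exists_isStableLeaf hz

end UniformBoxes

/-! ### Closed equivalence relations -/

section Topology

variable {X Y : Type*} [TopologicalSpace X] [TopologicalSpace Y]

lemma mem_of_isClosed_of_Icc_subset_imp_mem_nhds {A : Set ℝ} (hA : IsClosed A) (hzero : 0 ∈ A)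
    (hnhds : ∀ T ≥ 0, Icc 0 T ⊆ A → A ∈ nhds T) {T : ℝ} (hT : 0 ≤ T) : T ∈ A := by
  by_contra hTA
  let N : Set ℝ := Ici 0 ∩ Aᶜ
  have hbdd : BddBelow N := ⟨0, fun s hs ↦ hs.1⟩
  have hne : N.Nonempty := ⟨T, hT, hTA⟩
  have hnonneg : 0 ≤ sInf N := le_csInf hne fun s hs ↦ hs.1
  have hIco : Ico 0 (sInf N) ⊆ A := fun s hs ↦ by_contra fun hsA ↦
    hs.2.not_ge (csInf_le hbdd ⟨hs.1, hsA⟩)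
  have hIcc : Icc 0 (sInf N) ⊆ A := by
    rcases hnonneg.eq_or_lt with h | h
    · rw [← h, Icc_self]
      exact singleton_subset_iff.mpr hzero
    · rw [← closure_Ico h.ne]
      exact hA.closure_subset_iff.mpr hIco
  obtain ⟨s, hsA, hsN⟩ := mem_closure_iff_nhds.mp (csInf_mem_closure hne hbdd) A
    (hnhds _ hnonneg hIcc)
  exact hsN.2 hsA

lemma eventually_forall_mem_of_isClosed {R : X → Y → Prop} (hR : IsClosed {a : X × Y | R a.1 a.2})
    {K V : Set Y} (hK : IsCompact K) (hV : IsOpen V) {x : X} (h : ∀ y ∈ K, R x y → y ∈ V) :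
    ∀ᶠ x' in nhds x, ∀ y ∈ K, R x' y → y ∈ V := by
  refine hK.eventually_forall_of_forall_eventually fun y hy ↦ ?_
  by_cases hxy : R x y
  · filter_upwards [continuous_snd.continuousAt.eventually_mem (hV.mem_nhds (h y hy hxy))]
      with a ha _ using ha
  · filter_upwards [hR.isOpen_compl.mem_nhds (show (x, y) ∈ _ from hxy)] with a ha hRa
    exact absurd hRa ha

lemma continuousOn_of_isClosed_of_unique {R : X → Y → Prop}
    (hR : IsClosed {a : X × Y | R a.1 a.2}) {K : Set Y} (hK : IsCompact K) {s : Set X} {g : X → Y}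
    (hg : ∀ x ∈ s, g x ∈ K ∧ R x (g x)) (hunique : ∀ x ∈ s, ∀ y ∈ K, R x y → y = g x) :
    ContinuousOn g s := by
  refine fun x hx ↦ _root_.tendsto_nhds.mpr fun V hV hxV ↦ ?_
  have htube := eventually_forall_mem_of_isClosed hR hK hV
    fun y hy hxy ↦ show y ∈ V from hunique x hx y hy hxy ▸ hxV
  filter_upwards [nhdsWithin_le_nhds htube, self_mem_nhdsWithin] with x' htube hx'
  exact htube _ (hg x' hx').1 (hg x' hx').2

lemma isClosed_setOf_exists [CompactSpace Y] {A : Set (X × Y)} (hA : IsClosed A) :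
    IsClosed {x | ∃ y, (x, y) ∈ A} := by
  convert isClosedMap_fst_of_compactSpace _ hA using 1
  ext x
  simp

lemma subset_interior_of_isPreconnected_of_diff {s C A : Set X} (hs : IsPreconnected s)
    (hC : IsClosed C) (hA : ∀ x ∈ s, ∃ᶠ z in nhds x, z ∉ A)
    (hdiff : ∀ x ∈ s, ∃ N ∈ nhds x, N ⊆ s ∧ IsPreconnected (N \ A))
    (hopen : ∀ z ∈ s \ A, z ∈ C → C ∈ nhds z) (hne : (s \ A ∩ C).Nonempty) :
    s ⊆ interior C := by
  have hclosure : closure (interior C) ⊆ C := hC.closure_interior_subset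
  refine hs.subset_of_closure_inter_subset isOpen_interior ?_ fun x ⟨hxC, hxs⟩ ↦ ?_
  · obtain ⟨z, hz, hzC⟩ := hne
    exact ⟨z, hz.1, mem_interior_iff_mem_nhds.mpr (hopen z hz hzC)⟩
  obtain ⟨N, hN, hNs, hNA⟩ := hdiff x hxs
  obtain ⟨w, hwN, hwC⟩ := mem_closure_iff_nhds.mp hxC _ (interior_mem_nhds.mpr hN)
  obtain ⟨z, hzA, hzN, hzC⟩ := ((hA w (hNs (interior_subset hwN))).and_eventually
    ((isOpen_interior.inter isOpen_interior).mem_nhds ⟨hwN, hwC⟩)).exists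
  have hsub : N \ A ⊆ interior C :=
    hNA.subset_of_closure_inter_subset isOpen_interior ⟨z, ⟨interior_subset hzN, hzA⟩, hzC⟩
      fun y ⟨hyC, hy⟩ ↦
        mem_interior_iff_mem_nhds.mpr (hopen y ⟨hNs hy.1, hy.2⟩ (hclosure hyC))
  refine interior_maximal (fun y hy ↦ ?_) isOpen_interior (mem_interior_iff_mem_nhds.mpr hN)
  exact hclosure <| mem_closure_iff_frequently.mpr <|
    ((hA y (hNs (interior_subset hy))).and_eventually (isOpen_interior.mem_nhds hy)).mono
      fun z hz ↦ hsub ⟨interior_subset hz.2, hz.1⟩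

lemma exists_isConnected_diff_singleton_subset {H : Type*} [NormedAddCommGroup H]
    [NormedSpace ℝ H] [ChartedSpace H X] (hrank : 1 < Module.rank ℝ H) {p : X} {N : Set X}
    (hN : N ∈ nhds p) : ∃ V ⊆ N, IsOpen V ∧ p ∈ V ∧ IsConnected (V \ {p}) := by
  let e := chartAt H p
  have hp : p ∈ e.source := mem_chart_source H p
  obtain ⟨σ, hσ, hzero, hrange⟩ :=
    exists_isOpenEmbedding_range_subset (Filter.inter_mem (e.open_target.mem_nhds (e.map_source hp))
      ((e.continuousAt_symm (e.map_source hp)).preimage_mem_nhds (by rwa [e.left_inv hp])))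
  have htarget : range σ ⊆ e.target := hrange.trans inter_subset_left
  have hcont : Continuous (e.symm ∘ σ) :=
    e.continuousOn_symm.comp_continuous hσ.continuous fun v ↦ htarget (mem_range_self v)
  have hinj : Function.Injective (e.symm ∘ σ) := fun v w h ↦
    hσ.injective (e.symm.injOn (htarget (mem_range_self v)) (htarget (mem_range_self w)) h)
  have hbase : (e.symm ∘ σ) 0 = p := by rw [Function.comp_apply, hzero, e.left_inv hp]
  refine ⟨range (e.symm ∘ σ), range_subset_iff.mpr fun v ↦ (hrange (mem_range_self v)).2, ?_,
    ⟨0, hbase⟩, ?_⟩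
  · rw [range_comp]
    exact e.symm.isOpen_image_of_subset_source hσ.isOpen_range htarget
  · rw [← hbase, ← image_singleton, ← image_univ, ← image_sdiff hinj, ← compl_eq_univ_sdiff]
    exact (isConnected_compl_singleton_of_one_lt_rank hrank 0).image _ hcont.continuousOn

end Topology

/-- `R` is an equivalence relation on `B` with closed graph. -/
structure IsClosedEquivOn {X : Type*} [TopologicalSpace X] (R : X → X → Prop) (B : Set X) :
    Prop where
  isClosed : IsClosed {a : X × X | R a.1 a.2}
  refl : ∀ {x}, x ∈ B → R x x
  symm : ∀ {x y}, R x y → R y x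
  trans : ∀ {x y z}, R x y → R y z → R x z
  mem_left : ∀ {x y}, R x y → x ∈ B

namespace IsClosedEquivOn

variable {X : Type*} [TopologicalSpace X] {R : X → X → Prop} {B : Set X}

lemma mem_right (h : IsClosedEquivOn R B) {x y : X} (hxy : R x y) : y ∈ B :=
  h.mem_left (h.symm hxy)

lemma isClosed_setOf (h : IsClosedEquivOn R B) (x : X) : IsClosed {y | R x y} :=
  h.isClosed.preimage (Continuous.prodMk_right x)

end IsClosedEquivOn

namespace IsBox

variable {E₁ E₂ : Type*} [NormedAddCommGroup E₁] [NormedAddCommGroup E₂] [NormedSpace ℝ E₂]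
  {S U : M → M → Prop} {B : Set M} {x : M} {φ : E₁ × E₂ → M}

lemma frequently_not [Nontrivial E₂] (h : IsBox S U x φ) (hU : IsClosedEquivOn U B) (y : M) :
    ∃ᶠ z in nhds x, ¬ U y z := by
  intro hev
  simp only [not_not, ← h.map_zero] at hev
  have hslice : ∀ᶠ v : E₂ in nhds 0, U y (φ (0, v)) :=
    (h.continuous.comp (Continuous.prodMk_right 0)).continuousAt.eventually hev
  have := Module.punctured_nhds_neBot ℝ E₂ 0
  obtain ⟨v, hv, hne⟩ := Filter.nonempty_of_mem
    (Filter.inter_mem (mem_nhdsWithin_of_mem_nhds hslice) (self_mem_nhdsWithin (s := {0}ᶜ)))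
  exact hne ((h.snd_iff _ _).mp (hU.trans (hU.symm hv) hslice.self_of_nhds))

lemma isPreconnected_range_diff [NormedSpace ℝ E₁] (h : IsBox S U x φ) (hU : IsClosedEquivOn U B)
    (hrank : 1 < Module.rank ℝ E₂) (y : M) : IsPreconnected (range φ \ {z | U y z}) := by
  by_cases hex : ∃ a, U y (φ a)
  · obtain ⟨a, ha⟩ := hex
    have himage : range φ \ {z | U y z} = φ '' (univ ×ˢ {a.2}ᶜ) := by
      ext z
      refine ⟨fun ⟨⟨b, hb⟩, hz⟩ ↦ ⟨b, ⟨trivial, fun hba ↦ hz ?_⟩, hb⟩, ?_⟩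
      · exact hU.trans ha (hb ▸ (h.snd_iff a b).mpr (Eq.symm hba))
      · rintro ⟨b, ⟨-, hba⟩, rfl⟩
        exact ⟨mem_range_self b, fun hb ↦ hba ((h.snd_iff b a).mp (hU.trans (hU.symm hb) ha))⟩
    rw [himage]
    exact (isPreconnected_univ.prod
      (isConnected_compl_singleton_of_one_lt_rank hrank a.2).isPreconnected).image φ
      h.continuous.continuousOn
  · rw [show range φ \ {z | U y z} = range φ from sdiff_eq_left.mpr
      (disjoint_left.mpr fun z ⟨a, ha⟩ hz ↦ hex ⟨a, ha ▸ hz⟩)]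
    exact isPreconnected_range h.continuous

end IsBox

/-- A pair of transverse laminations of a neighbourhood `B` of `p`, given by their plaque relations
`S` and `U`, with a local product structure away from `p`. This models the local stable and unstable
sets of an expansive homeomorphism near an isolated singularity. -/
structure IsTransversePair (E₁ E₂ : Type*) [NormedAddCommGroup E₁] [NormedAddCommGroup E₂]
    (S U : M → M → Prop) (B : Set M) (p : M) : Prop where
  left : IsClosedEquivOn S B
  right : IsClosedEquivOn U B
  eq_of_left_of_right : ∀ {x y}, S x y → U x y → x = y
  mem_nhds : B ∈ nhds p
  exists_isBox : ∀ x ∈ interior B, x ≠ p → ∃ φ : E₁ × E₂ → M, IsBox S U x φ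

/-! ### Following one-dimensional plaques -/

section LeafConnected

variable {X : Type*} [TopologicalSpace X] {R : X → X → Prop} {B Θ : Set X}

/-- `x` and `y` lie in a connected piece of an `R`-class inside `Θ`. -/
def LeafConnected (R : X → X → Prop) (Θ : Set X) (x y : X) : Prop :=
  ∃ K, IsPreconnected K ∧ x ∈ K ∧ y ∈ K ∧ ∀ z ∈ K, z ∈ Θ ∧ R x z

lemma LeafConnected.rel {x y : X} : LeafConnected R Θ x y → R x y
  | ⟨_, _, _, hy, hK⟩ => (hK y hy).2

lemma exists_separation_of_forall_isPreconnected [T2Space X] {F : Set X} (hF : IsCompact F)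
    {x y : X} (hx : x ∈ F) (hy : y ∈ F) (h : ∀ K ⊆ F, IsPreconnected K → x ∈ K → y ∉ K) :
    ∃ V W, IsOpen V ∧ IsOpen W ∧ Disjoint V W ∧ F ⊆ V ∪ W ∧ x ∈ V ∧ y ∈ W := by
  have : CompactSpace F := isCompact_iff_compactSpace.mp hF
  have hcomponent : (⟨y, hy⟩ : F) ∉ connectedComponent ⟨x, hx⟩ := fun hmem ↦
    h _ (Subtype.coe_image_subset F _)
      (isPreconnected_connectedComponent.image _ continuous_subtype_val.continuousOn)
      (mem_image_of_mem _ mem_connectedComponent) (mem_image_of_mem _ hmem)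
  rw [connectedComponent_eq_iInter_isClopen, mem_iInter] at hcomponent
  push Not at hcomponent
  obtain ⟨⟨Z, hZ, hxZ⟩, hyZ⟩ := hcomponent
  obtain ⟨V, W, hV, hW, hZV, hZW, hVW⟩ := SeparatedNhds.of_isCompact_isCompact
    (hZ.isClosed.isCompact.image continuous_subtype_val)
    (hZ.compl.isClosed.isCompact.image continuous_subtype_val)
    ((disjoint_image_iff Subtype.val_injective).mpr disjoint_compl_right)
  refine ⟨V, W, hV, hW, hVW, fun z hz ↦ ?_, hZV ⟨_, hxZ, rfl⟩, hZW ⟨_, hyZ, rfl⟩⟩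
  by_cases hzZ : (⟨z, hz⟩ : F) ∈ Z
  · exact .inl (hZV ⟨_, hzZ, rfl⟩)
  · exact .inr (hZW ⟨_, hzZ, rfl⟩)

-- A separation of the `R`-class of `x` in `Θ` persists for the `R`-classes of nearby points.
lemma isClosed_setOf_leafConnected [CompactSpace X] [T2Space X] (hR : IsClosedEquivOn R B)
    (hΘ : IsClosed Θ) : IsClosed {a : X × X | LeafConnected R Θ a.1 a.2} := by
  refine isClosed_iff_nhds.mpr fun ⟨x, y⟩ hxy ↦ ?_
  have hclosed : IsClosed {a : X × X | a.1 ∈ Θ ∧ a.2 ∈ Θ ∧ R a.1 a.2} :=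
    (hΘ.preimage continuous_fst).inter ((hΘ.preimage continuous_snd).inter hR.isClosed)
  obtain ⟨hx, hy, hRxy⟩ : x ∈ Θ ∧ y ∈ Θ ∧ R x y :=
    isClosed_iff_nhds.mp hclosed (x, y) fun N hN ↦ by
      obtain ⟨a, haN, K, -, h₁, h₂, hK⟩ := hxy N hN
      exact ⟨a, haN, (hK _ h₁).1, hK _ h₂⟩
  by_contra hnot
  obtain ⟨V, W, hV, hW, hVW, hsub, hxV, hyW⟩ := exists_separation_of_forall_isPreconnected
    (hΘ.inter (hR.isClosed_setOf x)).isCompact ⟨hx, hR.refl (hR.mem_left hRxy)⟩ ⟨hy, hRxy⟩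
    fun K hKF hK hxK hyK ↦ hnot ⟨K, hK, hxK, hyK, hKF⟩
  have htube := eventually_forall_mem_of_isClosed hR.isClosed hΘ.isCompact (hV.union hW)
    fun z hz hxz ↦ hsub ⟨hz, hxz⟩
  obtain ⟨⟨x', y'⟩, ⟨⟨htube', hxV'⟩, hyW'⟩, K, hK, hxK, hyK, hKF⟩ := hxy _
    (prod_mem_nhds (htube.and (hV.mem_nhds hxV)) (hW.mem_nhds hyW))
  exact (hVW.le_bot ⟨(isPreconnected_iff_subset_of_disjoint.mp hK V W hV hW
    (fun z hz ↦ htube' z (hKF z hz).1 (hKF z hz).2)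
    (by rw [hVW.inter_eq, inter_empty])).resolve_right
      (fun h ↦ hVW.le_bot ⟨hxV', h hxK⟩) hyK, hyW'⟩).elim

lemma isClosedEquivOn_leafConnected [CompactSpace X] [T2Space X] (hR : IsClosedEquivOn R B)
    (hΘ : IsClosed Θ) (hΘB : Θ ⊆ B) : IsClosedEquivOn (LeafConnected R Θ) Θ where
  isClosed := isClosed_setOf_leafConnected hR hΘ
  refl hx := ⟨{_}, isPreconnected_singleton, rfl, rfl, by
    rintro _ rfl
    exact ⟨hx, hR.refl (hΘB hx)⟩⟩
  symm := fun ⟨K, hK, hx, hy, h⟩ ↦ ⟨K, hK, hy, hx, fun z hz ↦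
    ⟨(h z hz).1, hR.trans (hR.symm (h _ hy).2) (h z hz).2⟩⟩
  trans := fun ⟨K, hK, hx, hy, h⟩ ⟨K', hK', hy', hz', h'⟩ ↦
    ⟨K ∪ K', hK.union _ hy hy' hK', .inl hx, .inr hz', fun z hz ↦ hz.elim (h z) fun hz ↦
      ⟨(h' z hz).1, hR.trans (h _ hy).2 (h' z hz).2⟩⟩
  mem_left := fun ⟨_, _, hx, _, h⟩ ↦ (h _ hx).1

/-- The `R`-class of `z` contains an arc from `z` to the complement of the interior of `B`. -/
def HasExitArc (R : X → X → Prop) (B : Set X) (z : X) : Prop :=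
  ∃ c : ℝ → X, Continuous c ∧ c 0 = z ∧ ∃ T ≥ 0, (∀ s ∈ Icc 0 T, R z (c s)) ∧ c T ∉ interior B

lemma HasExitArc.exists_leafConnected {z : X} (h : HasExitArc R B z) (hΘ : IsClosed Θ)
    (hΘB : Θ ⊆ interior B) (hz : z ∈ interior Θ) : ∃ y ∉ interior Θ, LeafConnected R Θ z y := by
  obtain ⟨c, hc, rfl, T, hT, hR, hcT⟩ := h
  obtain ⟨s, ⟨⟨hs, hsT⟩, hexit⟩, hleast⟩ :=
    (isCompact_Icc.inter_right (isOpen_interior.isClosed_compl.preimage hc)).exists_isLeast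
      ⟨T, ⟨hT, le_rfl⟩, fun h ↦ hcT (hΘB (interior_subset h))⟩
  have hspos : 0 ≠ s := fun h ↦ hexit (h ▸ hz)
  have hIco : Ico 0 s ⊆ c ⁻¹' Θ := fun t ht ↦ interior_subset (s := Θ) <| by_contra fun h ↦
    (hleast ⟨⟨ht.1, ht.2.le.trans hsT⟩, h⟩).not_gt ht.2
  have hIcc : Icc 0 s ⊆ c ⁻¹' Θ :=
    closure_Ico hspos ▸ (hΘ.preimage hc).closure_subset_iff.mpr hIco
  refine ⟨c s, hexit, c '' Icc 0 s, isPreconnected_Icc.image _ hc.continuousOn,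
    mem_image_of_mem c ⟨le_rfl, hs⟩, mem_image_of_mem c ⟨hs, le_rfl⟩, ?_⟩
  rintro _ ⟨t, ht, rfl⟩
  exact ⟨hIcc ht, hR t ⟨ht.1, ht.2.trans hsT⟩⟩

end LeafConnected

section Slabs

variable {E : Type*}

/-- `A` is a union of slices `{t} × E` over an interval of parameters `t`. -/
def IsSlab (A : Set (ℝ × E)) : Prop := ∃ I : Set ℝ, I.OrdConnected ∧ ∀ a, a ∈ A ↔ a.1 ∈ I

lemma IsSlab.mem_of_fst_eq {A : Set (ℝ × E)} (hA : IsSlab A) {a b : ℝ × E} (hab : a.1 = b.1)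
    (ha : a ∈ A) : b ∈ A := by
  obtain ⟨I, -, hmem⟩ := hA
  rwa [hmem, ← hab, ← hmem]

variable [NormedAddCommGroup E] {S U : M → M → Prop} {B Θ : Set M} {x y : M}
  {φ ψ : ℝ × E → M}

lemma isSlab_sUnion {𝒜 : Set (Set (ℝ × E))} (h : ∀ A ∈ 𝒜, IsSlab A) (hzero : ∀ A ∈ 𝒜, 0 ∈ A) :
    IsSlab (⋃₀ 𝒜) := by
  choose! I hI hmem using h
  refine ⟨⋃ A ∈ 𝒜, I A, ordConnected_of_uIcc_subset_left (x := 0) fun t ht ↦ ?_, fun a ↦ ?_⟩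
  · obtain ⟨A, hA, htA⟩ := mem_iUnion₂.mp ht
    exact ((hI A hA).uIcc_subset ((hmem A hA 0).mp (hzero A hA)) htA).trans
      (subset_biUnion_of_mem (u := I) hA)
  · rw [mem_sUnion, mem_iUnion₂]
    exact exists_congr fun A ↦ ⟨fun ⟨hA, ha⟩ ↦ ⟨hA, (hmem A hA a).mp ha⟩,
      fun ⟨hA, ha⟩ ↦ ⟨hA, (hmem A hA a).mpr ha⟩⟩

namespace IsBox

lemma exists_transition {E₁ E₂ : Type*} [NormedAddCommGroup E₁] [NormedAddCommGroup E₂]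
    {φ ψ : E₁ × E₂ → M} (hφ : IsBox S U x φ) (hψ : IsBox S U y ψ) (hsub : range φ ⊆ range ψ) :
    ∃ (g₁ : E₁ → E₁) (g₂ : E₂ → E₂), Continuous g₁ ∧ Function.Injective g₁ ∧
      ∀ a, φ a = ψ (g₁ a.1, g₂ a.2) := by
  choose g hg using fun a ↦ hsub (mem_range_self a)
  have hcont : Continuous g := hψ.isOpenEmbedding.isInducing.continuous_iff.mpr <| by
    simpa only [Function.comp_def, hg] using hφ.continuous
  have hfst : ∀ a b, (g a).1 = (g b).1 ↔ a.1 = b.1 := fun a b ↦ by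
    rw [← hψ.fst_iff, hg, hg, hφ.fst_iff]
  have hsnd : ∀ a b, (g a).2 = (g b).2 ↔ a.2 = b.2 := fun a b ↦ by
    rw [← hψ.snd_iff, hg, hg, hφ.snd_iff]
  refine ⟨fun t ↦ (g (t, 0)).1, fun v ↦ (g (0, v)).2, by fun_prop,
    fun t t' h ↦ (hfst _ _).mp h, fun a ↦ ?_⟩
  simp only [← (hfst a (a.1, 0)).mpr rfl, ← (hsnd a (0, a.2)).mpr rfl, hg]

lemma isSlab_preimage_of_range_subset (hφ : IsBox S U x φ) (hψ : IsBox S U y ψ)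
    (hsub : range φ ⊆ range ψ) (hΘ : IsSlab (ψ ⁻¹' Θ)) : IsSlab (φ ⁻¹' Θ) := by
  obtain ⟨g₁, g₂, hcont, hinj, hg⟩ := hφ.exists_transition hψ hsub
  obtain ⟨I, hI, hmem⟩ := hΘ
  refine ⟨g₁ ⁻¹' I, ?_, fun a ↦ by rw [mem_preimage, hg, ← mem_preimage, hmem, mem_preimage]⟩
  rcases hcont.strictMono_of_inj hinj with h | h
  · exact hI.preimage_mono h.monotone
  · exact hI.preimage_anti h.antitone

lemma leafConnected_of_isSlab (h : IsBox S U x φ) (hΘ : IsSlab (φ ⁻¹' Θ)) {a b : ℝ × E}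
    (hab : a.2 = b.2) (ha : φ a ∈ Θ) (hb : φ b ∈ Θ) : LeafConnected U Θ (φ a) (φ b) := by
  obtain ⟨I, hI, hmem⟩ := hΘ
  refine ⟨(fun t ↦ φ (t, a.2)) '' uIcc a.1 b.1, isPreconnected_uIcc.image _ ?_,
    ⟨a.1, left_mem_uIcc, rfl⟩, ⟨b.1, right_mem_uIcc, by rw [hab]⟩, ?_⟩
  · exact (h.continuous.comp (Continuous.prodMk_left a.2)).continuousOn
  · rintro _ ⟨t, ht, rfl⟩
    exact ⟨(hmem _).mpr (hI.uIcc_subset ((hmem a).mp ha) ((hmem b).mp hb) ht),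
      (h.snd_iff _ _).mpr rfl⟩

-- A point `φ c` of `Θ` near `φ b` is joined inside `Θ` to the point `φ (a.1, c.2)` near `φ a`.
lemma eventually_mem_of_snd_eq (h : IsBox S U x φ) (hΘ : IsSlab (φ ⁻¹' Θ)) {C : Set M}
    (hC : ∀ z z', LeafConnected U Θ z z' → z ∈ C → z' ∈ C) {a b : ℝ × E} (hab : a.2 = b.2)
    (ha : φ a ∈ Θ) (hnear : ∀ᶠ z in nhds (φ a), z ∈ Θ → z ∈ C) :
    ∀ᶠ z in nhds (φ b), z ∈ Θ → z ∈ C := by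
  have hslice : ∀ c : ℝ × E, φ (a.1, c.2) ∈ Θ := fun c ↦
    hΘ.mem_of_fst_eq (a := a) (b := (a.1, c.2)) rfl ha
  have hcont : Continuous fun c : ℝ × E ↦ φ (a.1, c.2) := h.continuous.comp (by fun_prop)
  have htendsto : Filter.Tendsto (fun c : ℝ × E ↦ φ (a.1, c.2)) (nhds b) (nhds (φ a)) := by
    simpa only [← hab] using hcont.tendsto b
  rw [← h.isOpenEmbedding.map_nhds_eq, Filter.eventually_map]
  filter_upwards [htendsto.eventually hnear] with c hc hcΘ
  exact hC _ _ (h.leafConnected_of_isSlab hΘ (a := (a.1, c.2)) rfl (hslice c) hcΘ) (hc (hslice c))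

end IsBox

/-- `Θ` meets every sufficiently small box at `x` in a slab. -/
def IsTame (S U : M → M → Prop) (Θ : Set M) (x : M) : Prop :=
  ∃ O ∈ nhds x, ∀ φ : ℝ × E → M, IsBox S U x φ → range φ ⊆ O → IsSlab (φ ⁻¹' Θ)

lemma IsBox.isTame (hψ : IsBox S U y ψ) (hΘ : IsSlab (ψ ⁻¹' Θ)) (hx : x ∈ range ψ) :
    IsTame (E := E) S U Θ x :=
  ⟨range ψ, hψ.isOpenEmbedding.isOpen_range.mem_nhds hx, fun _ hφ hsub ↦
    hφ.isSlab_preimage_of_range_subset hψ hsub hΘ⟩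

lemma isTame_of_mem_interior (hx : x ∈ interior Θ) : IsTame (E := E) S U Θ x :=
  ⟨interior Θ, isOpen_interior.mem_nhds hx, fun _ _ hsub ↦ ⟨univ, ordConnected_univ, fun a ↦
    iff_of_true (interior_subset (s := Θ) (hsub (mem_range_self a))) trivial⟩⟩

/-- The interior of `Θ` together with all boxes centred on the `U`-class of `p` that meet `Θ` in
a slab: an open set of points at which `Θ` is tame. -/
def tameRegion (E : Type*) [NormedAddCommGroup E] (S U : M → M → Prop) (Θ : Set M)
    (p : M) : Set M :=
  interior Θ ∪ ⋃₀ {O | ∃ (w : M) (φ : ℝ × E → M),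
    IsBox S U w φ ∧ U p w ∧ IsSlab (φ ⁻¹' Θ) ∧ range φ = O}

lemma isTame_of_mem_tameRegion {p : M} (hx : x ∈ tameRegion E S U Θ p) :
    IsTame (E := E) S U Θ x := by
  rcases hx with hx | ⟨_, ⟨w, φ, hφ, -, hslab, rfl⟩, hx⟩
  exacts [isTame_of_mem_interior hx, hφ.isTame hslab hx]

lemma isTame_sUnion {𝒯 : Set (Set M)} (hfinite : 𝒯.Finite) (hclosed : ∀ T ∈ 𝒯, IsClosed T)
    (htame : ∀ T ∈ 𝒯, x ∈ T → IsTame (E := E) S U T x) : IsTame (E := E) S U (⋃₀ 𝒯) x := by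
  have hO : ∀ T ∈ 𝒯, ∃ O ∈ nhds x, (x ∉ T → O ⊆ Tᶜ) ∧ (x ∈ T → ∀ φ : ℝ × E → M,
      IsBox S U x φ → range φ ⊆ O → IsSlab (φ ⁻¹' T)) := fun T hT ↦ by
    by_cases hx : x ∈ T
    · obtain ⟨O, hO, hslab⟩ := htame T hT hx
      exact ⟨O, hO, absurd hx, fun _ ↦ hslab⟩
    · exact ⟨Tᶜ, (hclosed T hT).isOpen_compl.mem_nhds hx, fun _ ↦ subset_rfl, fun h ↦ absurd h hx⟩
  choose! O hO havoid hslab using hO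
  refine ⟨⋂ T ∈ 𝒯, O T, (Filter.biInter_mem hfinite).mpr hO, fun φ hφ hsub ↦ ?_⟩
  have hsub' : ∀ T ∈ 𝒯, range φ ⊆ O T := fun T hT ↦ hsub.trans (biInter_subset_of_mem hT)
  have hpreimage : φ ⁻¹' ⋃₀ 𝒯 = ⋃₀ (preimage φ '' {T ∈ 𝒯 | x ∈ T}) := by
    ext a
    simp only [mem_preimage, mem_sUnion, sUnion_image, mem_iUnion₂, exists_prop]
    refine exists_congr fun T ↦ ⟨fun ⟨hT, ha⟩ ↦ ⟨⟨hT, ?_⟩, ha⟩, fun h ↦ ⟨h.1.1, h.2⟩⟩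
    exact by_contra fun hx ↦ havoid T hT hx (hsub' T hT (mem_range_self a)) ha
  rw [hpreimage]
  refine isSlab_sUnion ?_ ?_
  · rintro _ ⟨T, ⟨hT, hxT⟩, rfl⟩
    exact hslab T hT hxT φ hφ (hsub' T hT)
  · rintro _ ⟨T, ⟨-, hxT⟩, rfl⟩
    rwa [mem_preimage, hφ.map_zero]

variable [NormedSpace ℝ E]

lemma IsBox.exists_isTame_tube [FiniteDimensional ℝ E] (h : IsBox S U x φ) :
    ∃ T ⊆ range φ, IsClosed T ∧ T ∈ nhds x ∧ ∀ y ∈ T, U x y → IsTame (E := E) S U T y := by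
  have : ProperSpace E := FiniteDimensional.proper_real E
  obtain ⟨σ, hσ, hσzero, hσrange⟩ := exists_isOpenEmbedding_range_subset
    (closedBall_mem_nhds (0 : E) one_pos)
  have hψ := h.comp_prodMap Topology.IsOpenEmbedding.id hσ
  have hslab : IsSlab (φ ∘ Prod.map id σ ⁻¹' (φ '' closedBall 0 1)) :=
    ⟨Icc (-1) 1, ordConnected_Icc, fun a ↦ by
      have hv := mem_closedBall_zero_iff.mp (hσrange (mem_range_self a.2))
      rw [preimage_comp, h.injective.preimage_image, mem_preimage, mem_closedBall_zero_iff,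
        Prod.norm_def, max_le_iff, Prod.map_snd, and_iff_left hv, mem_Icc, ← abs_le]
      rfl⟩
  refine ⟨φ '' closedBall 0 1, image_subset_range _ _,
    ((isCompact_closedBall 0 1).image h.continuous).isClosed, ?_, ?_⟩
  · rw [← h.map_zero]
    exact h.isOpenEmbedding.image_mem_nhds.mpr (closedBall_mem_nhds 0 one_pos)
  · rintro _ ⟨b, -, rfl⟩ hU
    rw [← h.map_zero, h.snd_iff] at hU
    exact hψ.isTame hslab ⟨(b.1, 0), congrArg φ (Prod.ext rfl (hσzero.trans hU))⟩

end Slabs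

namespace IsTransversePair

variable {E : Type*} [NormedAddCommGroup E] {S U : M → M → Prop}
  {B Θ : Set M} {p q z : M} [CompactSpace M]

/-- The points `z` of `Θ` whose `U`-class in `Θ` is joined to the `S`-class of `q`. -/
def hitSet (S U : M → M → Prop) (Θ : Set M) (q : M) : Set M :=
  {z | ∃ x, S q x ∧ LeafConnected U Θ z x}

lemma isClosed_hitSet (h : IsTransversePair ℝ E S U B p) (hΘ : IsClosed Θ) :
    IsClosed (hitSet S U Θ q) :=
  isClosed_setOf_exists (A := {a : M × M | S q a.2 ∧ LeafConnected U Θ a.1 a.2})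
    (((h.left.isClosed_setOf q).preimage continuous_snd).inter
      (isClosed_setOf_leafConnected h.right hΘ))

-- A plaque of `U` that leaves `Θ` crosses a box centred on the plaque of `p`.
lemma exists_isBox_mem_hitSet (h : IsTransversePair ℝ E S U B p) (hΘ : IsClosed Θ)
    (hΘB : Θ ⊆ interior B) (hregion : ∀ x ∈ Θ, U z x → x ∈ tameRegion E S U Θ p)
    (hz : z ∈ interior Θ) (hexit : HasExitArc U B z) :
    ∃ (q : M) (φ : ℝ × E → M), IsBox S U q φ ∧ U p q ∧ z ∈ hitSet S U Θ q := by
  obtain ⟨y, hy, hzy⟩ := hexit.exists_leafConnected hΘ hΘB hz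
  have hyΘ : y ∈ Θ := (isClosedEquivOn_leafConnected h.right hΘ
    (hΘB.trans interior_subset)).mem_right hzy
  obtain ⟨_, ⟨w, φ, hφ, hpw, -, rfl⟩, c, rfl⟩ := (hregion y hyΘ hzy.rel).resolve_left hy
  have hw : U w (φ (c.1, 0)) := hφ.map_zero ▸ (hφ.snd_iff 0 (c.1, 0)).mpr rfl
  exact ⟨φ (c.1, 0), _, hφ.recentre (c.1, 0), h.right.trans hpw hw, φ c,
    (hφ.fst_iff _ _).mpr rfl, hzy⟩

variable [NormedSpace ℝ E]

lemma eventually_mem_hitSet (h : IsTransversePair ℝ E S U B p) (hΘ : IsClosed Θ)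
    (hΘB : Θ ⊆ interior B) (hz : ¬ U p z) (htame : ∀ x ∈ Θ, U z x → IsTame (E := E) S U Θ x)
    (hzC : z ∈ hitSet S U Θ q) : ∀ᶠ z' in nhds z, z' ∈ Θ → z' ∈ hitSet S U Θ q := by
  have hequiv := isClosedEquivOn_leafConnected h.right hΘ (hΘB.trans interior_subset)
  have hbox : ∀ x ∈ Θ, U z x → ∃ φ : ℝ × E → M, IsBox S U x φ ∧ IsSlab (φ ⁻¹' Θ) :=
    fun x hx hUx ↦ by
      obtain ⟨O, hO, hslab⟩ := htame x hx hUx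
      obtain ⟨φ, hφ⟩ := h.exists_isBox x (hΘB hx) fun hxp ↦ hz (h.right.symm (hxp ▸ hUx))
      obtain ⟨ψ, hψ, hrange⟩ := hφ.exists_range_subset hO
      exact ⟨ψ, hψ, hslab ψ hψ hrange⟩
  have hsat : ∀ z z', LeafConnected U Θ z z' → z ∈ hitSet S U Θ q → z' ∈ hitSet S U Θ q :=
    fun _ _ hzz' ⟨x, hSx, hzx⟩ ↦ ⟨x, hSx, hequiv.trans (hequiv.symm hzz') hzx⟩
  obtain ⟨x, hSx, K, hK, hzK, hxK, hKΘ⟩ := hzC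
  let P : M → Prop := fun w ↦ ∀ᶠ z' in nhds w, z' ∈ Θ → z' ∈ hitSet S U Θ q
  have hPx : P x := by
    obtain ⟨φ, hφ, hslab⟩ := hbox x (hKΘ x hxK).1 (hKΘ x hxK).2
    filter_upwards [hφ.range_mem_nhds]
    rintro _ ⟨c, rfl⟩ hc
    have hmem : φ (0, c.2) ∈ Θ := hslab.mem_of_fst_eq (a := 0) (b := (0, c.2)) rfl
      (show φ 0 ∈ Θ from hφ.map_zero.symm ▸ (hKΘ x hxK).1)
    have hS : S x (φ (0, c.2)) := hφ.map_zero ▸ (hφ.fst_iff 0 (0, c.2)).mpr rfl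
    exact ⟨_, h.left.trans hSx hS, hφ.leafConnected_of_isSlab hslab rfl hc hmem⟩
  refine (hK.induction₂' (fun w w' ↦ P w ↔ P w') (fun w hw ↦ ?_)
    (fun _ _ _ _ _ _ ↦ Iff.trans) hzK hxK).mpr hPx
  obtain ⟨φ, hφ, hslab⟩ := hbox w (hKΘ w hw).1 (hKΘ w hw).2
  filter_upwards [mem_nhdsWithin_of_mem_nhds hφ.range_mem_nhds, self_mem_nhdsWithin]
    with w' ⟨b, hb⟩ hw'
  rw [← hφ.map_zero] at hw ⊢
  rw [← hb] at hw' ⊢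
  have h0b : (0 : ℝ × E).2 = b.2 :=
    (hφ.snd_iff 0 b).mp (h.right.trans (h.right.symm (hKΘ _ hw).2) (hKΘ _ hw').2)
  have hiff : P (φ 0) ↔ P (φ b) := ⟨hφ.eventually_mem_of_snd_eq hslab hsat h0b (hKΘ _ hw).1,
    hφ.eventually_mem_of_snd_eq hslab hsat h0b.symm (hKΘ _ hw').1⟩
  exact ⟨hiff, hiff.symm⟩

-- The sphere of a small ball around `p` need not be transverse to the plaques of `U`; covering its
-- intersection with the `U`-class of `p` by product tubes repairs this.
lemma exists_isTame_nhds [FiniteDimensional ℝ E] (h : IsTransversePair ℝ E S U B p) :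
    ∃ Θ ⊆ interior B, IsClosed Θ ∧ Θ ∈ nhds p ∧ ∀ x ∈ Θ, U p x → IsTame (E := E) S U Θ x := by
  obtain ⟨r, hr, hball⟩ := nhds_basis_closedBall.mem_iff.mp (interior_mem_nhds.mpr h.mem_nhds)
  let K : Set M := sphere p r ∩ {x | U p x}
  have hK : IsCompact K := isClosed_sphere.isCompact.inter_right (h.right.isClosed_setOf p)
  have htube : ∀ x ∈ K, ∃ T ⊆ interior B, IsClosed T ∧ T ∈ nhds x ∧
      ∀ y ∈ T, U x y → IsTame (E := E) S U T y := fun x hx ↦ by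
    have hxB := hball (sphere_subset_closedBall hx.1)
    obtain ⟨φ, hφ⟩ := h.exists_isBox x hxB (ne_of_mem_sphere hx.1 hr.ne')
    obtain ⟨ψ, hψ, hrange⟩ := hφ.exists_range_subset (isOpen_interior.mem_nhds hxB)
    obtain ⟨T, hT, hT'⟩ := hψ.exists_isTame_tube
    exact ⟨T, hT.trans hrange, hT'⟩
  choose! T hTB hTclosed hTnhds hTtame using htube
  obtain ⟨t, htK, hcover⟩ := hK.elim_nhds_subcover (fun x ↦ interior (T x))
    fun x hx ↦ interior_mem_nhds.mpr (hTnhds x hx)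
  let 𝒯 : Set (Set M) := insert (closedBall p r) (T '' t)
  have hfinite : 𝒯.Finite := (t.finite_toSet.image T).insert _
  have hclosed : ∀ A ∈ 𝒯, IsClosed A := forall_mem_insert.mpr
    ⟨isClosed_closedBall, forall_mem_image.mpr fun x hx ↦ hTclosed x (htK x hx)⟩
  refine ⟨⋃₀ 𝒯, sUnion_subset (forall_mem_insert.mpr
      ⟨hball, forall_mem_image.mpr fun x hx ↦ hTB x (htK x hx)⟩),
    sUnion_eq_biUnion ▸ hfinite.isClosed_biUnion hclosed,
    Filter.mem_of_superset (closedBall_mem_nhds p hr) (subset_sUnion_of_mem (mem_insert _ _)),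
    fun x _ hUx ↦ ?_⟩
  by_cases hxint : x ∈ interior (⋃₀ 𝒯)
  · exact isTame_of_mem_interior hxint
  have havoid : ∀ A ∈ 𝒯, x ∉ interior A := fun A hA hxA ↦
    hxint (interior_mono (subset_sUnion_of_mem hA) hxA)
  have hxball : x ∉ closedBall p r := fun hxr ↦ by
    rcases (mem_closedBall.mp hxr).lt_or_eq with hlt | heq
    · exact havoid _ (mem_insert _ _) (ball_subset_interior_closedBall hlt)
    · obtain ⟨w, hw, hxw⟩ := mem_iUnion₂.mp (hcover ⟨heq, hUx⟩)
      exact havoid _ (mem_insert_of_mem _ (mem_image_of_mem T hw)) hxw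
  exact isTame_sUnion hfinite hclosed (forall_mem_insert.mpr ⟨fun h ↦ absurd h hxball,
    forall_mem_image.mpr fun w hw hxw ↦ hTtame w (htK w hw) x hxw
      (h.right.trans (h.right.symm (htK w hw).2) hUx)⟩)

lemma eventually_forall_mem_tameRegion (h : IsTransversePair ℝ E S U B p) (hΘ : IsClosed Θ)
    (hΘB : Θ ⊆ interior B) (hΘp : Θ ∈ nhds p)
    (htame : ∀ x ∈ Θ, U p x → IsTame (E := E) S U Θ x) :
    ∀ᶠ z in nhds p, ∀ x ∈ Θ, U z x → x ∈ tameRegion E S U Θ p := by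
  refine eventually_forall_mem_of_isClosed h.right.isClosed hΘ.isCompact
    (isOpen_interior.union (isOpen_sUnion ?_)) fun x hx hUx ↦ ?_
  · rintro _ ⟨w, φ, hφ, -, -, rfl⟩
    exact hφ.isOpenEmbedding.isOpen_range
  · rcases eq_or_ne x p with rfl | hne
    · exact .inl (mem_interior_iff_mem_nhds.mpr hΘp)
    obtain ⟨O, hO, hslab⟩ := htame x hx hUx
    obtain ⟨φ, hφ⟩ := h.exists_isBox x (hΘB hx) hne
    obtain ⟨ψ, hψ, hrange⟩ := hφ.exists_range_subset hO
    exact .inr ⟨_, ⟨x, ψ, hψ, hUx, hslab ψ hψ hrange, rfl⟩, 0, hψ.map_zero⟩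

lemma diff_singleton_subset_hitSet (h : IsTransversePair ℝ E S U B p)
    (hrank : 1 < Module.rank ℝ E) (hΘ : IsClosed Θ) (hΘB : Θ ⊆ interior B) {V : Set M}
    (hV : IsOpen V) (hVΘ : V ⊆ Θ) (hconn : IsPreconnected (V \ {p}))
    (htame : ∀ z ∈ V, ∀ x ∈ Θ, U z x → IsTame (E := E) S U Θ x) (hz : z ∈ V \ {p})
    (hpz : ¬ U p z) (hzq : z ∈ hitSet S U Θ q) : V \ {p} ⊆ hitSet S U Θ q := by
  have : Nontrivial E := rank_pos_iff_nontrivial.mp (zero_lt_one.trans hrank)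
  have hbox : ∀ x ∈ V \ {p}, ∃ φ : ℝ × E → M, IsBox S U x φ ∧ range φ ⊆ V \ {p} :=
    fun x hx ↦ by
      obtain ⟨φ, hφ⟩ := h.exists_isBox x (hΘB (hVΘ hx.1)) hx.2
      exact hφ.exists_range_subset ((hV.sdiff isClosed_singleton).mem_nhds hx)
  refine (subset_interior_of_isPreconnected_of_diff (A := {z | U p z}) hconn (h.isClosed_hitSet hΘ)
    (fun x hx ↦ ?_) (fun x hx ↦ ?_) (fun x hx hxq ↦ ?_) ⟨z, ⟨hz, hpz⟩, hzq⟩).trans interior_subset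
  · obtain ⟨φ, hφ, -⟩ := hbox x hx
    exact hφ.frequently_not h.right p
  · obtain ⟨φ, hφ, hrange⟩ := hbox x hx
    exact ⟨_, hφ.range_mem_nhds, hrange, hφ.isPreconnected_range_diff h.right hrank p⟩
  · filter_upwards [h.eventually_mem_hitSet hΘ hΘB hx.2 (htame x hx.1.1) hxq, hV.mem_nhds hx.1.1]
      with y hy hyV using hy (hVΘ hyV)

theorem exists_isBox_eventually_hit [FiniteDimensional ℝ E] (h : IsTransversePair ℝ E S U B p)
    (hrank : 1 < Module.rank ℝ E)
    (hpunctured : ∀ N ∈ nhds p, ∃ V ⊆ N, IsOpen V ∧ p ∈ V ∧ IsConnected (V \ {p}))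
    (hexit : ∀ O ⊆ interior B, IsOpen O → O.Nonempty → ∃ z ∈ O, HasExitArc U B z) :
    ∃ (q : M) (φ : ℝ × E → M), IsBox S U q φ ∧ U p q ∧ ∀ᶠ z in nhds p, ∃ x, S q x ∧ U z x := by
  have : Nontrivial E := rank_pos_iff_nontrivial.mp (zero_lt_one.trans hrank)
  obtain ⟨Θ, hΘB, hΘ, hΘp, htame⟩ := h.exists_isTame_nhds
  obtain ⟨V, hVN, hV, hpV, hconn⟩ := hpunctured _ (Filter.inter_mem (interior_mem_nhds.mpr hΘp)
    (h.eventually_forall_mem_tameRegion hΘ hΘB hΘp htame))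
  have hVΘ : V ⊆ Θ := fun z hz ↦ interior_subset (hVN hz).1
  have hopen : IsOpen (V \ {p}) := hV.sdiff isClosed_singleton
  obtain ⟨x, hx⟩ := hconn.nonempty
  obtain ⟨ψ, hψ⟩ := h.exists_isBox x (hΘB (hVΘ hx.1)) hx.2
  have hne : ((V \ {p}) \ {z | U p z}).Nonempty :=
    ((hψ.frequently_not h.right p).and_eventually (hopen.mem_nhds hx)).exists.imp fun _ ↦ And.symm
  obtain ⟨z, ⟨hzV, hpz⟩, hzexit⟩ := hexit _ (fun z hz ↦ hΘB (hVΘ hz.1.1))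
    (hopen.sdiff (h.right.isClosed_setOf p)) hne
  obtain ⟨q, φ, hφ, hpq, hzq⟩ :=
    h.exists_isBox_mem_hitSet hΘ hΘB (hVN hzV.1).2 (hVN hzV.1).1 hzexit
  refine ⟨q, φ, hφ, hpq, Filter.mem_of_superset (hV.mem_nhds hpV) fun y hy ↦ ?_⟩
  rcases eq_or_ne y p with rfl | hyp
  · exact ⟨q, h.left.refl (h.right.mem_right hpq), hpq⟩
  · obtain ⟨x, hqx, hyx⟩ := h.diff_singleton_subset_hitSet hrank hΘ hΘB hV hVΘ hconn.isPreconnected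
      (fun z hz x hx hzx ↦ isTame_of_mem_tameRegion ((hVN hz).2 x hx hzx)) hzV hpz hzq ⟨hy, hyp⟩
    exact ⟨x, hqx, hyx.rel⟩

end IsTransversePair

/-! ### The box at the exceptional point -/

/-- `κ` parametrises a cross-section to the plaques of `U`, onto which `π` projects `W` along these
plaques. -/
structure IsPlaqueProjection {E : Type*} [NormedAddCommGroup E] (U : M → M → Prop) (W : Set M)
    (κ : E → M) (π : M → E) : Prop where
  continuous : Continuous κ
  rel_iff : ∀ y y', U (κ y) (κ y') ↔ y = y'
  continuousOn : ContinuousOn π W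
  rel : ∀ z ∈ W, U z (κ (π z))

namespace IsTransversePair

variable {E₁ E₂ : Type*} [NormedAddCommGroup E₁] [NormedAddCommGroup E₂]
  {S U : M → M → Prop} {B W : Set M} {κ : E₂ → M} {π : M → E₂} {p q v w v' : M} {φ : E₁ × E₂ → M}

lemma proj_eq (h : IsTransversePair E₁ E₂ S U B p) (hπ : IsPlaqueProjection U W κ π) {y : E₂}
    (hv : v ∈ W) (hU : U v (κ y)) : π v = y :=
  (hπ.rel_iff _ _).mp (h.right.trans (h.right.symm (hπ.rel v hv)) hU)

lemma bracket_unique (h : IsTransversePair E₁ E₂ S U B p) {x : M} (hv : S w v ∧ U v x)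
    (hv' : S w v' ∧ U v' x) : v = v' :=
  h.eq_of_left_of_right (h.left.trans (h.left.symm hv.1) hv'.1)
    (h.right.trans hv.2 (h.right.symm hv'.2))

lemma frequently_not_left [NormedSpace ℝ E₁] [Nontrivial E₁]
    [(nhdsWithin p {p}ᶜ).NeBot] (h : IsTransversePair E₁ E₂ S U B p) {x : M}
    (hx : x ∈ interior B) : ∃ᶠ z in nhds x, ¬ S p z := by
  have hne : ∀ x ∈ interior B, x ≠ p → ∃ᶠ z in nhds x, ¬ S p z := fun x hx hxp ↦ by
    obtain ⟨φ, hφ⟩ := h.exists_isBox x hx hxp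
    exact hφ.swap.frequently_not h.left p
  rcases eq_or_ne x p with rfl | hxp
  · intro hev
    obtain ⟨z, ⟨hz, hzB⟩, hzp⟩ := (Filter.Eventually.and
      (nhdsWithin_le_nhds (hev.eventually_nhds.and (isOpen_interior.mem_nhds hx)))
      (self_mem_nhdsWithin (s := {x}ᶜ))).exists
    exact hne z hzB hzp hz
  · exact hne x hx hxp

lemma isClosed_setOf_bracket (h : IsTransversePair E₁ E₂ S U B p) (hκ : Continuous κ) :
    IsClosed {a : (M × E₂) × M | S a.1.1 a.2 ∧ U a.2 (κ a.1.2)} :=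
  (h.left.isClosed.preimage (by fun_prop : Continuous fun a : (M × E₂) × M ↦ (a.1.1, a.2))).inter
    (h.right.isClosed.preimage (by fun_prop : Continuous fun a : (M × E₂) × M ↦ (a.2, κ a.1.2)))

variable [NormedSpace ℝ E₂] [FiniteDimensional ℝ E₂]

theorem exists_isPlaqueProjection [CompactSpace M] (h : IsTransversePair E₁ E₂ S U B p)
    (hφ : IsBox S U q φ) (hpq : U p q) (hhit : ∀ᶠ z in nhds p, ∃ x, S q x ∧ U z x) :
    ∃ W ∈ nhds p, ∃ (κ : E₂ → M) (π : M → E₂), IsPlaqueProjection U W κ π := by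
  have : ProperSpace E₂ := FiniteDimensional.proper_real E₂
  have hclosed : IsClosed {a : M × M | S q a.2 ∧ U a.1 a.2} :=
    ((h.left.isClosed_setOf q).preimage continuous_snd).inter h.right.isClosed
  have hnear : ∀ᶠ z in nhds p, ∀ x ∈ univ, S q x ∧ U z x → x ∈ φ '' ball 0 1 :=
    eventually_forall_mem_of_isClosed hclosed isCompact_univ
      (hφ.isOpenEmbedding.isOpenMap _ isOpen_ball) fun x _ hx ↦
        ⟨0, mem_ball_self one_pos, hφ.map_zero.trans (h.eq_of_left_of_right hx.1
          (h.right.trans (h.right.symm hpq) hx.2))⟩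
  let W : Set M := {z | ∃ y ∈ closedBall (0 : E₂) 1, U z (φ (0, y))}
  have hW : W ∈ nhds p := by
    filter_upwards [hnear, hhit] with z hz ⟨x, hx⟩
    obtain ⟨⟨t, y⟩, hy, rfl⟩ := hz x trivial hx
    rw [← hφ.map_zero, hφ.fst_iff] at hx
    obtain rfl : 0 = t := hx.1
    exact ⟨y, mem_closedBall_zero_iff.mpr
      ((norm_snd_le _).trans (mem_ball_zero_iff.mp hy).le), hx.2⟩
  choose! π hπball hπ using fun z (hz : z ∈ W) ↦ hz
  have hκ : Continuous fun y ↦ φ (0, y) := hφ.continuous.comp (Continuous.prodMk_right 0)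
  refine ⟨W, hW, fun y ↦ φ (0, y), π, hκ, fun y y' ↦ hφ.snd_iff _ _, ?_, hπ⟩
  exact continuousOn_of_isClosed_of_unique (R := fun z y ↦ U z (φ (0, y)))
    (h.right.isClosed.preimage (continuous_id.prodMap hκ)) (isCompact_closedBall 0 1)
    (fun z hz ↦ ⟨hπball z hz, hπ z hz⟩)
    fun z hz y _ hy ↦ (hφ.snd_iff _ _).mp (h.right.trans (h.right.symm hy) (hπ z hz))

lemma range_proj_mem_nhds (h : IsTransversePair E₁ E₂ S U B p) (hπ : IsPlaqueProjection U W κ π)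
    (hφ : IsBox S U v φ) (hφW : range φ ⊆ W) :
    range (fun y ↦ π (φ (0, y))) ∈ nhds (π v) := by
  have hW : ∀ y, φ (0, y) ∈ W := fun y ↦ hφW (mem_range_self _)
  have hcont : Continuous fun y ↦ π (φ (0, y)) :=
    hπ.continuousOn.comp_continuous (hφ.continuous.comp (Continuous.prodMk_right 0)) hW
  have hinj : Function.Injective fun y ↦ π (φ (0, y)) := fun y y' hyy' ↦ by
    have hy := hπ.rel _ (hW y)
    rw [show π (φ (0, y)) = π (φ (0, y')) from hyy'] at hy
    exact (hφ.snd_iff _ _).mp (h.right.trans hy (h.right.symm (hπ.rel _ (hW y'))))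
  rw [← image_univ]
  exact (isOpen_image_of_injOn_of_finrank_eq rfl isOpen_univ hcont.continuousOn
    hinj.injOn).mem_nhds ⟨0, trivial, congrArg π hφ.map_zero⟩

variable [NormedSpace ℝ E₁]

lemma eventually_exists_bracket_of_bracket (h : IsTransversePair E₁ E₂ S U B p)
    (hπ : IsPlaqueProjection U W κ π) {D : Set M} (hDW : D ⊆ W) (hDB : D ⊆ interior B) {y : E₂}
    (hv : v ∈ interior D) (hvp : v ≠ p) (hS : S w v) (hU : U v (κ y)) :
    ∀ᶠ y' in nhds y, ∃ v' ∈ D, S w v' ∧ U v' (κ y') := by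
  obtain ⟨φ, hφ⟩ := h.exists_isBox v (hDB (interior_subset hv)) hvp
  obtain ⟨ψ, hψ, hrange⟩ := hφ.exists_range_subset (mem_interior_iff_mem_nhds.mp hv)
  rw [← h.proj_eq hπ (hDW (interior_subset hv)) hU]
  filter_upwards [h.range_proj_mem_nhds hπ hψ (hrange.trans hDW)]
  rintro _ ⟨y', rfl⟩
  have hmem : ψ (0, y') ∈ D := hrange (mem_range_self _)
  exact ⟨_, hmem, h.left.trans hS (hψ.map_zero ▸ (hψ.fst_iff 0 (0, y')).mpr rfl),
    hπ.rel _ (hDW hmem)⟩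

lemma exists_isBox_of_continuousOn_bracket {n : ℕ} [ChartedSpace (EuclideanSpace ℝ (Fin n)) M]
    [FiniteDimensional ℝ E₁] (hdim : Module.finrank ℝ (E₁ × E₂) = n)
    (h : IsTransversePair E₁ E₂ S U B p) (hπ : IsPlaqueProjection U W κ π) (hpW : p ∈ W)
    {N : Set (M × E₂)} {β : M × E₂ → M} (hβcont : ContinuousOn β N)
    (hβ : ∀ a ∈ N, S a.1 (β a) ∧ U (β a) (κ a.2)) (hN : N ∈ nhds (v, π p)) (hpv : S p v)
    (hφ : IsBox S U v φ) : ∃ ψ : E₁ × E₂ → M, IsBox S U p ψ := by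
  obtain ⟨O₁, hO₁, O₂, hO₂, hON⟩ := mem_nhds_prod_iff.mp hN
  obtain ⟨χ, hχ, hχO⟩ := hφ.exists_range_subset hO₁
  obtain ⟨σ, hσ, hσ0, hσO⟩ := exists_isOpenEmbedding_range_subset hO₂
  let ψ : E₁ × E₂ → M := fun a ↦ β (χ (a.1, 0), σ a.2)
  have hmem : ∀ a : E₁ × E₂, (χ (a.1, 0), σ a.2) ∈ N := fun a ↦
    hON (mk_mem_prod (hχO (mem_range_self _)) (hσO (mem_range_self _)))
  have hψ : ∀ a, S (χ (a.1, 0)) (ψ a) ∧ U (ψ a) (κ (σ a.2)) := fun a ↦ hβ _ (hmem a)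
  have hcont : Continuous ψ := hβcont.comp_continuous
    ((hχ.continuous.comp (by fun_prop)).prodMk (hσ.continuous.comp continuous_snd)) hmem
  have hzero : ψ 0 = p := by
    refine h.bracket_unique (hψ 0) ⟨?_, ?_⟩
    · exact (hχ.map_zero.symm ▸ h.left.symm hpv : S (χ 0) p)
    · exact (hσ0.symm ▸ hπ.rel p hpW : U p (κ (σ 0)))
  have hfst : ∀ a b, S (ψ a) (ψ b) ↔ a.1 = b.1 := fun a b ↦ Iff.trans
    ⟨fun hS ↦ h.left.trans (h.left.trans (hψ a).1 hS) (h.left.symm (hψ b).1),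
      fun hS ↦ h.left.trans (h.left.trans (h.left.symm (hψ a).1) hS) (hψ b).1⟩
    (hχ.fst_iff (a.1, 0) (b.1, 0))
  have hsnd : ∀ a b, U (ψ a) (ψ b) ↔ a.2 = b.2 := fun a b ↦ Iff.trans
    ⟨fun hU ↦ h.right.trans (h.right.trans (h.right.symm (hψ a).2) hU) (hψ b).2,
      fun hU ↦ h.right.trans (h.right.trans (hψ a).2 hU) (h.right.symm (hψ b).2)⟩
    ((hπ.rel_iff _ _).trans hσ.injective.eq_iff)
  have hinj : Function.Injective ψ := fun a b hab ↦ Prod.ext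
    ((hfst a b).mp (hab ▸ h.left.refl (h.left.mem_right (hψ a).1)))
    ((hsnd a b).mp (hab ▸ h.right.refl (h.right.mem_left (hψ a).2)))
  exact ⟨ψ, isOpenEmbedding_of_continuous_injective (n := n) hdim hcont hinj, hzero, hfst, hsnd⟩

variable [CompactSpace M]

lemma exists_bracket_of_isPreconnected (h : IsTransversePair E₁ E₂ S U B p)
    (hπ : IsPlaqueProjection U W κ π) {D : Set M} (hD : IsClosed D) (hDW : D ⊆ W)
    (hDB : D ⊆ interior B) {s : Set E₂} (hs : IsPreconnected s) (hw : w ∈ D) (hpw : ¬ S p w)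
    (hws : π w ∈ s) (hstay : ∀ y ∈ s, ∀ v ∈ D, S w v ∧ U v (κ y) → v ∈ interior D) {y : E₂}
    (hy : y ∈ s) : ∃ v, S w v ∧ U v (κ y) := by
  let C : Set E₂ := {y | ∃ v, v ∈ D ∧ S w v ∧ U v (κ y)}
  have hC : IsClosed C := isClosed_setOf_exists <| (hD.preimage continuous_snd).inter <|
    (h.isClosed_setOf_bracket hπ.continuous).preimage
      (by fun_prop : Continuous fun a : E₂ × M ↦ ((w, a.1), a.2))
  have hopen : ∀ y ∈ s, y ∈ C → y ∈ interior C := fun y hy ⟨v, hv, hS, hU⟩ ↦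
    mem_interior_iff_mem_nhds.mpr <|
      h.eventually_exists_bracket_of_bracket hπ hDW hDB (hstay y hy v hv ⟨hS, hU⟩)
        (fun hvp ↦ hpw (h.left.symm (hvp ▸ hS))) hS hU
  have hbase : π w ∈ C := ⟨w, hw, h.left.refl (interior_subset (hDB hw)), hπ.rel w (hDW hw)⟩
  obtain ⟨v, -, hv⟩ := interior_subset <| hs.subset_of_closure_inter_subset isOpen_interior
    ⟨π w, hws, hopen _ hws hbase⟩
    (fun y hy ↦ hopen y hy.2 (hC.closure_interior_subset hy.1)) hy
  exact ⟨v, hv⟩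

-- For `w` off the `S`-class of `p` the set of admissible `y` is open and closed in a ball; the
-- remaining `w` follow by density.
theorem eventually_exists_bracket [Nontrivial E₁] [(nhdsWithin p {p}ᶜ).NeBot]
    (h : IsTransversePair E₁ E₂ S U B p) (hπ : IsPlaqueProjection U W κ π) (hW : W ∈ nhds p) :
    ∀ᶠ a : M × E₂ in nhds (p, π p), ∃ v, S a.1 v ∧ U v (κ a.2) := by
  obtain ⟨r, hr, hD⟩ := nhds_basis_closedBall.mem_iff.mp
    (Filter.inter_mem hW (interior_mem_nhds.mpr h.mem_nhds))
  have hDp : closedBall p r ∈ nhds p := closedBall_mem_nhds p hr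
  have hp : S p p ∧ U p (κ (π p)) :=
    ⟨h.left.refl (mem_of_mem_nhds h.mem_nhds), hπ.rel p (mem_of_mem_nhds hW)⟩
  have hclosed := h.isClosed_setOf_bracket hπ.continuous
  have hstay : ∀ᶠ a in nhds (p, π p), ∀ v ∈ closedBall p r,
      S a.1 v ∧ U v (κ a.2) → v ∈ interior (closedBall p r) :=
    eventually_forall_mem_of_isClosed (R := fun (a : M × E₂) v ↦ S a.1 v ∧ U v (κ a.2)) hclosed
      isClosed_closedBall.isCompact isOpen_interior fun v _ hv ↦
        h.bracket_unique hp hv ▸ mem_interior_iff_mem_nhds.mpr hDp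
  obtain ⟨A, hA, T, hT, hAT⟩ := mem_nhds_prod_iff.mp hstay
  obtain ⟨s, hs, hsT⟩ := Metric.mem_nhds_iff.mp hT
  let A' : Set M := interior (A ∩ closedBall p r ∩ π ⁻¹' ball (π p) s)
  have hA' : A' ∈ nhds p := interior_mem_nhds.mpr <| Filter.inter_mem (Filter.inter_mem hA hDp)
    ((hπ.continuousOn.continuousAt hW).preimage_mem_nhds (ball_mem_nhds _ hs))
  filter_upwards [prod_mem_nhds hA' (ball_mem_nhds (π p) hs)] with ⟨w, y⟩ ⟨hw, hy⟩
  have hE : IsClosed {w | ∃ v, S w v ∧ U v (κ y)} := isClosed_setOf_exists <| hclosed.preimage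
    (by fun_prop : Continuous fun a : M × M ↦ ((a.1, y), a.2))
  have hfrequently : ∃ᶠ w' in nhds w, ¬ S p w' :=
    h.frequently_not_left (hD (interior_subset hw).1.2).2
  refine hE.closure_subset (mem_closure_iff_frequently.mpr ?_)
  refine (hfrequently.and_eventually (isOpen_interior.mem_nhds hw)).mono fun w' ⟨hpw', hw'⟩ ↦ ?_
  obtain ⟨⟨hw'A, hw'D⟩, hw'π⟩ := interior_subset hw'
  exact h.exists_bracket_of_isPreconnected hπ isClosed_closedBall (fun v hv ↦ (hD hv).1)
    (fun v hv ↦ (hD hv).2) (convex_ball (π p) s).isPreconnected hw'D hpw' hw'π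
    (fun y hy ↦ hAT (mk_mem_prod hw'A (hsT hy))) hy

theorem exists_continuousOn_bracket [Nontrivial E₁] [(nhdsWithin p {p}ᶜ).NeBot]
    (h : IsTransversePair E₁ E₂ S U B p) (hπ : IsPlaqueProjection U W κ π) (hW : W ∈ nhds p) :
    ∃ N ∈ nhds (p, π p), ∃ β : M × E₂ → M, ContinuousOn β N ∧
      ∀ a ∈ N, S a.1 (β a) ∧ U (β a) (κ a.2) := by
  have : Nonempty M := ⟨p⟩
  have hN := h.eventually_exists_bracket hπ hW
  choose! β hβ using fun (a : M × E₂) (ha : ∃ v, S a.1 v ∧ U v (κ a.2)) ↦ ha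
  exact ⟨_, hN, β, continuousOn_of_isClosed_of_unique
    (R := fun (a : M × E₂) v ↦ S a.1 v ∧ U v (κ a.2)) (h.isClosed_setOf_bracket hπ.continuous)
    isCompact_univ (fun a ha ↦ ⟨trivial, hβ a ha⟩)
    (fun a ha v _ hv ↦ h.bracket_unique hv (hβ a ha)), hβ⟩

-- Any `v` in the `S`-class of `p` other than `p` has a box, and the plaques of `S` near `p` are
-- parametrised by the plaques of `S` in that box.
theorem exists_isBox_of_isPlaqueProjection {n : ℕ} [ChartedSpace (EuclideanSpace ℝ (Fin n)) M]
    [FiniteDimensional ℝ E₁] [Nontrivial E₁] [Nontrivial E₂] [(nhdsWithin p {p}ᶜ).NeBot]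
    (hdim : Module.finrank ℝ (E₁ × E₂) = n) (h : IsTransversePair E₁ E₂ S U B p)
    (hπ : IsPlaqueProjection U W κ π) (hW : W ∈ nhds p) : ∃ φ : E₁ × E₂ → M, IsBox S U p φ := by
  obtain ⟨N, hN, β, hβcont, hβ⟩ := h.exists_continuousOn_bracket hπ hW
  have hp : S p p ∧ U p (κ (π p)) :=
    ⟨h.left.refl (mem_of_mem_nhds h.mem_nhds), hπ.rel p (mem_of_mem_nhds hW)⟩
  have hβp : β (p, π p) = p := h.bracket_unique (hβ _ (mem_of_mem_nhds hN)) hp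
  have hslice : Filter.Tendsto (fun y ↦ (p, y)) (nhds (π p)) (nhds (p, π p)) :=
    (Continuous.prodMk_right p).tendsto _
  have hβtendsto : Filter.Tendsto (fun y ↦ β (p, y)) (nhds (π p)) (nhds p) := by
    simpa only [hβp] using! (hβcont.continuousAt hN).tendsto.comp hslice
  have hnear : ∀ᶠ v in nhds p, v ∈ interior B ∧ N ∈ nhds (v, π p) :=
    Filter.Eventually.and (interior_mem_nhds.mpr h.mem_nhds)
      (((Continuous.prodMk_left (π p)).tendsto p).eventually (eventually_mem_nhds_iff.mpr hN))
  have := Module.punctured_nhds_neBot ℝ E₂ (π p)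
  obtain ⟨y, ⟨⟨hvB, hvN⟩, hyN⟩, hy⟩ := (Filter.Eventually.and
    (nhdsWithin_le_nhds ((hβtendsto.eventually hnear).and (hslice.eventually hN)))
    (self_mem_nhdsWithin (s := {π p}ᶜ))).exists
  set v := β (p, y)
  have hv : S p v ∧ U v (κ y) := hβ _ hyN
  have hvp : v ≠ p := fun hvp ↦ hy (h.proj_eq hπ (mem_of_mem_nhds hW) (hvp ▸ hv.2)).symm
  obtain ⟨ψ, hψ⟩ := h.exists_isBox v hvB hvp
  exact h.exists_isBox_of_continuousOn_bracket hdim hπ (mem_of_mem_nhds hW) hβcont hβ hvN hv.1 hψ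

theorem exists_isBox_of_eventually_hit {n : ℕ} [ChartedSpace (EuclideanSpace ℝ (Fin n)) M]
    [FiniteDimensional ℝ E₁] [Nontrivial E₁] [Nontrivial E₂] [(nhdsWithin p {p}ᶜ).NeBot]
    (hdim : Module.finrank ℝ (E₁ × E₂) = n) (h : IsTransversePair E₁ E₂ S U B p)
    (hφ : IsBox S U q φ) (hpq : U p q) (hhit : ∀ᶠ z in nhds p, ∃ x, S q x ∧ U z x) :
    ∃ φ : E₁ × E₂ → M, IsBox S U p φ := by
  obtain ⟨W, hW, κ, π, hπ⟩ := h.exists_isPlaqueProjection hφ hpq hhit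
  exact h.exists_isBox_of_isPlaqueProjection hdim hπ hW

end IsTransversePair

/-! ### Isolated singularities -/

/-- `x` and `y` are points of `B` on the same local stable set of `g`. Restricting to `B` makes this
an equivalence relation when `B` is small. -/
def PlaqueRel (g : M ≃ₜ M) (δ : ℝ) (B : Set M) (x y : M) : Prop := x ∈ B ∧ y ∈ B ∧ y ∈ WsLoc g δ x

section PlaqueRel

variable {f g : M ≃ₜ M} {α δ : ℝ} {B : Set M} {p x z : M}

lemma isClosed_setOf_plaqueRel (hB : IsClosed B) :
    IsClosed {a : M × M | PlaqueRel g δ B a.1 a.2} :=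
  (hB.preimage continuous_fst).inter
    ((hB.preimage continuous_snd).inter (isClosed_setOf_mem_WsLoc g δ))

lemma isClosedEquivOn_plaqueRel (hδ : 0 ≤ δ) (hB : IsClosed B)
    (hhalf : ∀ x y, PlaqueRel g δ B x y → y ∈ WsLoc g (δ / 2) x) :
    IsClosedEquivOn (PlaqueRel g δ B) B where
  isClosed := isClosed_setOf_plaqueRel hB
  refl hx := ⟨hx, hx, self_mem_WsLoc g hδ _⟩
  symm h := ⟨h.2.1, h.1, WsLoc_symm h.2.2⟩
  trans h h' := ⟨h.1, h'.2.1, WsLoc_trans_half (hhalf _ _ h) (hhalf _ _ h')⟩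
  mem_left h := h.1

lemma isBox_plaqueRel_iff {E₁ E₂ : Type*} [NormedAddCommGroup E₁] [NormedAddCommGroup E₂]
    {φ : E₁ × E₂ → M} :
    IsBox (PlaqueRel f δ B) (PlaqueRel g δ B) x φ ↔
      range φ ⊆ B ∧ IsBox (fun x y ↦ y ∈ WsLoc f δ x) (fun x y ↦ y ∈ WsLoc g δ x) x φ := by
  have hrel (k : M ≃ₜ M) (hB : ∀ a, φ a ∈ B) (a b : E₁ × E₂) :
      PlaqueRel k δ B (φ a) (φ b) ↔ φ b ∈ WsLoc k δ (φ a) := by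
    simp only [PlaqueRel, hB, true_and]
  refine ⟨fun h ↦ ?_, fun ⟨hB, h⟩ ↦ ?_⟩
  · have hB : ∀ a, φ a ∈ B := fun a ↦ ((h.fst_iff a a).mpr rfl).1
    exact ⟨range_subset_iff.mpr hB, h.isOpenEmbedding, h.map_zero,
      fun a b ↦ (hrel f hB a b).symm.trans (h.fst_iff a b),
      fun a b ↦ (hrel g hB a b).symm.trans (h.snd_iff a b)⟩
  · exact ⟨h.isOpenEmbedding, h.map_zero,
      fun a b ↦ (hrel f (range_subset_iff.mp hB) a b).trans (h.fst_iff a b),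
      fun a b ↦ (hrel g (range_subset_iff.mp hB) a b).trans (h.snd_iff a b)⟩

lemma IsStableLeaf.hasExitArc {F : Type*} [NormedAddCommGroup F] [NormedSpace ℝ F] [Nontrivial F]
    {i : F → M} (hi : IsStableLeaf g δ z i) (hδ : 0 < δ) (hB : IsClosed B) (hz : z ∈ B)
    (hhalf : ∀ x y, PlaqueRel g δ B x y → y ∈ WsLoc g (δ / 2) x) :
    HasExitArc (PlaqueRel g δ B) B z := by
  obtain ⟨v, hv⟩ := exists_ne (0 : F)
  have hray : Continuous fun s : ℝ ↦ i (s • v) := hi.continuous.comp (by fun_prop)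
  by_contra hnot
  have hstay : ∀ T : ℝ, 0 ≤ T → (∀ s ∈ Icc 0 T, PlaqueRel g δ B z (i (s • v))) →
      i (T • v) ∈ interior B := fun T hT hR ↦ by_contra fun hTB ↦
      hnot ⟨_, hray, by rw [zero_smul, hi.map_zero], T, hT, hR, hTB⟩
  have hall : ∀ T : ℝ, 0 ≤ T → PlaqueRel g δ B z (i (T • v)) := fun T hT ↦ by
    refine mem_of_isClosed_of_Icc_subset_imp_mem_nhds (A := {s | PlaqueRel g δ B z (i (s • v))})
      ((isClosed_setOf_plaqueRel hB).preimage (continuous_const.prodMk hray)) ?_ ?_ hT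
    · rw [mem_ofPred_eq, zero_smul, hi.map_zero]
      exact ⟨hz, hz, self_mem_WsLoc g hδ.le z⟩
    · intro T hT hA
      have hnear : ∀ᶠ s : ℝ in nhds T, i (s • v) ∈ WsLoc g (δ / 2) (i (T • v)) :=
        (by fun_prop : Continuous fun s : ℝ ↦ s • v).continuousAt.eventually
          (hi.eventually_mem_WsLoc (T • v) (δ / 2) (half_pos hδ))
      filter_upwards [hnear, hray.continuousAt.eventually_mem
        (isOpen_interior.mem_nhds (hstay T hT hA))] with s hs hsB
      exact ⟨hz, interior_subset hsB, WsLoc_trans_half (hhalf _ _ (hA ⟨hT, le_rfl⟩)) hs⟩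
  obtain ⟨T, hT, hTz⟩ := hi.exists_smul_notMem_WsLoc v hv
  exact hTz (hall T (zero_le_one.trans hT)).2.2

variable [CompactSpace M]

lemma IsExpansive.exists_isClosed_nhds_plaqueRel_half (hexp : IsExpansive f α) (hα : 0 < α)
    {O : Set M} (hO : O ∈ nhds p) :
    ∃ B ∈ nhds p, IsClosed B ∧ B ⊆ O ∧ (∀ x y, PlaqueRel f α B x y → y ∈ WsLoc f (α / 2) x) ∧
      ∀ x y, PlaqueRel f.symm α B x y → y ∈ WsLoc f.symm (α / 2) x := by
  obtain ⟨ρ, hρ, hS⟩ := hexp.exists_mem_WsLoc_of_dist_lt (half_pos hα)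
  obtain ⟨ρ', hρ', hU⟩ := hexp.symm.exists_mem_WsLoc_of_dist_lt (half_pos hα)
  obtain ⟨r, hr, hrO⟩ := nhds_basis_closedBall.mem_iff.mp
    (Filter.inter_mem hO (ball_mem_nhds p (half_pos (lt_min hρ hρ'))))
  have hdist : ∀ x ∈ closedBall p r, ∀ y ∈ closedBall p r, dist x y < min ρ ρ' := fun x hx y hy ↦ by
    linarith [dist_triangle_right x y p, mem_ball.mp (hrO hx).2, mem_ball.mp (hrO hy).2]
  exact ⟨closedBall p r, closedBall_mem_nhds p hr, isClosed_closedBall, fun x hx ↦ (hrO hx).1,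
    fun x y h ↦ hS x y h.2.2 ((hdist x h.1 y h.2.1).trans_le (min_le_left _ _)),
    fun x y h ↦ hU x y h.2.2 ((hdist x h.1 y h.2.1).trans_le (min_le_right _ _))⟩

theorem IsExpansive.exists_isTransversePair {n r : ℕ} [ChartedSpace (EuclideanSpace ℝ (Fin n)) M]
    {E₁ E₂ : Type*} [NormedAddCommGroup E₁] [NormedSpace ℝ E₁] [FiniteDimensional ℝ E₁]
    [NormedAddCommGroup E₂] [NormedSpace ℝ E₂] [FiniteDimensional ℝ E₂] (hexp : IsExpansive f α)
    (hα : 0 < α) (hD : Dense (PerHr f n r)) (h₁ : Module.finrank ℝ E₁ = n - r)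
    (h₂ : Module.finrank ℝ E₂ = r) (hp : ∀ᶠ x in nhds p, x ≠ p → AdmitsLPS f n x) :
    ∃ B, IsTransversePair E₁ E₂ (PlaqueRel f α B) (PlaqueRel f.symm α B) B p ∧
      IsClosed B ∧ ∀ x y, PlaqueRel f.symm α B x y → y ∈ WsLoc f.symm (α / 2) x := by
  obtain ⟨B, hBp, hB, hBO, hhalf, hhalf'⟩ := hexp.exists_isClosed_nhds_plaqueRel_half hα hp
  refine ⟨B, ?_, hB, hhalf'⟩
  exact {
    left := isClosedEquivOn_plaqueRel hα.le hB hhalf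
    right := isClosedEquivOn_plaqueRel hα.le hB hhalf'
    eq_of_left_of_right := fun hS hU ↦ hexp.eq_of_mem_WsLoc hS.2.2 hU.2.2
    mem_nhds := hBp
    exists_isBox := fun x hx hxp ↦ by
      obtain ⟨φ, hφ⟩ := hexp.exists_isBox_of_admitsLPS hα hD (hBO (interior_subset hx) hxp) h₁ h₂
      obtain ⟨ψ, hψ, hrange⟩ := hφ.exists_range_subset (mem_interior_iff_mem_nhds.mp hx)
      exact ⟨ψ, isBox_plaqueRel_iff.mpr ⟨hrange, hψ⟩⟩ }

theorem IsExpansive.admitsLPS_of_eventually_ne {n : ℕ} [ChartedSpace (EuclideanSpace ℝ (Fin n)) M]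
    (hn : 3 ≤ n) (hexp : IsExpansive f α) (hα : 0 < α) (hD : Dense (PerHr f n (n - 1)))
    (hp : ∀ᶠ x in nhds p, x ≠ p → AdmitsLPS f n x) : AdmitsLPS f n p := by
  have : Nonempty (Fin (n - (n - 1))) := Fin.pos_iff_nonempty.mp (by lia)
  have : Nonempty (Fin (n - 1)) := Fin.pos_iff_nonempty.mp (by lia)
  have hrank : 1 < Module.rank ℝ (Fin (n - 1) → ℝ) := by
    rw [rank_fin_fun]; exact_mod_cast (by lia : 1 < n - 1)
  have hpunctured : ∀ N ∈ nhds p, ∃ V ⊆ N, IsOpen V ∧ p ∈ V ∧ IsConnected (V \ {p}) := fun N hN ↦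
    exists_isConnected_diff_singleton_subset (H := EuclideanSpace ℝ (Fin n))
      (Module.lt_rank_of_lt_finrank (by simp; lia)) hN
  have : (nhdsWithin p {p}ᶜ).NeBot := mem_closure_iff_nhdsWithin_neBot.mp <|
    mem_closure_iff_nhds.mpr fun N hN ↦ by
      obtain ⟨V, hVN, -, -, hV⟩ := hpunctured N hN
      exact hV.nonempty.mono fun x hx ↦ ⟨hVN hx.1, hx.2⟩
  obtain ⟨B, h, hB, hhalf⟩ := hexp.exists_isTransversePair hα hD (E₁ := ℝ)
    (E₂ := Fin (n - 1) → ℝ) (by simp; lia) (by simp) hp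
  have hexit : ∀ O ⊆ interior B, IsOpen O → O.Nonempty →
      ∃ z ∈ O, HasExitArc (PlaqueRel f.symm α B) B z := fun O hOB hO hne ↦ by
    obtain ⟨z, hz, hzO⟩ := hD.exists_mem_open hO hne
    obtain ⟨i, hi⟩ := hexp.exists_isStableLeaf_symm hz
    exact ⟨z, hzO, hi.hasExitArc hα hB (interior_subset (hOB hzO)) hhalf⟩
  obtain ⟨q, φ, hφ, hpq, hhit⟩ := h.exists_isBox_eventually_hit hrank hpunctured hexit
  obtain ⟨χ, hχ⟩ := h.exists_isBox_of_eventually_hit (n := n) (by simp; lia) hφ hpq hhit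
  obtain ⟨ψ, hψ⟩ := (isBox_plaqueRel_iff.mp hχ).2.exists_of_finrank_eq (F₁ := Fin 1 → ℝ)
    (F₂ := Fin (n - 1) → ℝ) (by simp) rfl
  exact hψ.admitsLPS hα

end PlaqueRel

theorem stmt19_general {M : Type*} [MetricSpace M] [CompactSpace M]
    (n : ℕ) [ChartedSpace (EuclideanSpace ℝ (Fin n)) M] (hn : 3 ≤ n)
    (f : M ≃ₜ M) (α : ℝ) (hα : 0 < α) (hexp : IsExpansive f α)
    (hdense : closure (PerHr f n (n - 1)) = Set.univ) :
    ∀ p : M, ¬ AdmitsLPS f n p →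
      p ∈ closure ({q : M | ¬ AdmitsLPS f n q} \ {p}) := by
  intro p hp
  by_contra hcl
  refine hp (hexp.admitsLPS_of_eventually_ne hn hα (dense_iff_closure_eq.mpr hdense) ?_)
  filter_upwards [isClosed_closure.isOpen_compl.mem_nhds hcl] with x hx hxp
  by_contra hsing
  exact hx (subset_closure ⟨hsing, hxp⟩)

/-- **Lemma (no isolated singularities).** If `dim M = n ≥ 3` and `Per_H^{n-1}` is dense,
then the set of singularities of an expansive homeomorphism `f` has no isolated points. -/
theorem stmt19 {M : Type*} [MetricSpace M] [CompactSpace M] [ConnectedSpace M]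
    (n : ℕ) [ChartedSpace (EuclideanSpace ℝ (Fin n)) M] (hn : 3 ≤ n)
    (f : M ≃ₜ M) (α : ℝ) (hα : 0 < α) (hexp : IsExpansive f α)
    (hdense : closure (PerHr f n (n - 1)) = Set.univ) :
    ∀ p : M, ¬ AdmitsLPS f n p →
      p ∈ closure ({q : M | ¬ AdmitsLPS f n q} \ {p}) :=
  stmt19_general n hn f α hα hexp hdense
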